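/- arXiv:1308.5074 — 4 statements merged into one kernel-verified Lean document; each statement's English description precedes it below -/
import Mathlib

section
/- Let k > n be positive integers, let E ⊆ ℝ^k be a Lebesgue-measurable set, and let f : E → ℝ^{2n+1} be Lipschitz as a map from E (with the Euclidean metric) to (ℝ^{2n+1}, d_K). Then the k-dimensional Hausdorff measure of f(E) with respect to the metric d_K is zero. -/
open MeasureTheory Metric Set
open scoped ENNReal NNReal

noncomputable section

abbrev Heis (n : ℕ) := EuclideanSpace ℝ (Fin (2*n+1))
abbrev Horiz (n : ℕ) := EuclideanSpace ℝ (Fin (2*n))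

def xIdx (n : ℕ) (j : Fin n) : Fin (2*n+1) := ⟨2*j.1, by have := j.2; omega⟩
def yIdx (n : ℕ) (j : Fin n) : Fin (2*n+1) := ⟨2*j.1+1, by have := j.2; omega⟩
def tIdx (n : ℕ) : Fin (2*n+1) := ⟨2*n, by omega⟩
def xIdx2 (n : ℕ) (j : Fin n) : Fin (2*n) := ⟨2*j.1, by have := j.2; omega⟩
def yIdx2 (n : ℕ) (j : Fin n) : Fin (2*n) := ⟨2*j.1+1, by have := j.2; omega⟩

/-- The Korányi distance on the Heisenberg group `ℍ^n = ℝ^{2n+1}`. -/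
def dK (n : ℕ) (p q : Heis n) : ℝ :=
  ((∑ j : Fin n, ((p (xIdx n j) - q (xIdx n j))^2 + (p (yIdx n j) - q (yIdx n j))^2))^2
    + (p (tIdx n) - q (tIdx n)
        + 2 * ∑ j : Fin n, (q (xIdx n j) * p (yIdx n j) - p (xIdx n j) * q (yIdx n j)))^2)
    ^ ((1:ℝ)/4)

/-- The kernel of the standard contact form `α = dt + 2∑ (x_j dy_j − y_j dx_j)` at `p`. -/
def kerAlpha (n : ℕ) (p : Heis n) : Set (Heis n) :=
  {v | v (tIdx n)
    + 2 * ∑ j : Fin n, (p (xIdx n j) * v (yIdx n j) - p (yIdx n j) * v (xIdx n j)) = 0}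

/-- The standard symplectic form on `ℝ^{2n}`. -/
def omegaF (n : ℕ) (v w : Horiz n) : ℝ :=
  ∑ j : Fin n, (v (xIdx2 n j) * w (yIdx2 n j) - v (yIdx2 n j) * w (xIdx2 n j))

/-- The projection `π : ℝ^{2n+1} → ℝ^{2n}` forgetting the `t`-coordinate. -/
def piH (n : ℕ) (p : Heis n) : Horiz n :=
  (EuclideanSpace.equiv (Fin (2*n)) ℝ).symm (fun i => p ⟨i.1, by have := i.2; omega⟩)

/-- Diameter of a set with respect to the Korányi distance, as an extended real. -/
def kDiam (n : ℕ) (U : Set (Heis n)) : ℝ≥0∞ :=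
  ⨆ p ∈ U, ⨆ q ∈ U, ENNReal.ofReal (dK n p q)

/-- `S` is null for the `k`-dimensional Hausdorff measure built from the Korányi
distance: its `k`-dimensional Hausdorff content is arbitrarily small. -/
def IsHausdorffNullK (n k : ℕ) (S : Set (Heis n)) : Prop :=
  ∀ ε : ℝ≥0∞, 0 < ε → ∃ U : ℕ → Set (Heis n),
    (S ⊆ ⋃ i, U i) ∧ ∑' i, (kDiam n (U i)) ^ k < ε

/-- `f` is Lipschitz on `E` as a map into `(ℝ^{2n+1}, d_K)`. -/
def LipschitzOnK (n : ℕ) {k : ℕ} (f : EuclideanSpace ℝ (Fin k) → Heis n)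
    (E : Set (EuclideanSpace ℝ (Fin k))) : Prop :=
  ∃ L : ℝ, 0 ≤ L ∧ ∀ x ∈ E, ∀ y ∈ E, dK n (f x) (f y) ≤ L * dist x y

end

section Auxiliary

open Filter Topology Module

theorem tendsto_const_mul_nhdsGT_zero {c : ℝ} (hc : 0 < c) :
    Tendsto (fun r : ℝ => c * r) (𝓝[>] 0) (𝓝[>] 0) := by
  refine tendsto_nhdsWithin_iff.2 ⟨?_, ?_⟩
  · have : Tendsto (fun r : ℝ => c * r) (𝓝 0) (𝓝 (c * 0)) := tendsto_id.const_mul c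
    rw [mul_zero] at this
    exact this.mono_left nhdsWithin_le_nhds
  · filter_upwards [self_mem_nhdsWithin] with r hr using mul_pos hc hr

/-- If an outer measure of enlarged balls is controlled by a measure of the balls along a fine
family of balls centered on `S`, then it is controlled on `S`. -/
theorem OuterMeasure.le_mul_of_fine_closedBall {V : Type*} [NormedAddCommGroup V]
    [NormedSpace ℝ V] [FiniteDimensional ℝ V] [MeasurableSpace V] [BorelSpace V]
    (μ : Measure V) (F : OuterMeasure V) (c : ℝ≥0∞) {S U : Set V} (hU : IsOpen U) (hSU : S ⊆ U)
    (h : ∀ x ∈ S, ∀ ρ > (0 : ℝ), ∃ r, 0 < r ∧ r < ρ ∧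
      F (closedBall x (5 * r)) ≤ c * μ (closedBall x r)) :
    F S ≤ c * μ U := by
  have h' : ∀ x ∈ S, ∃ r, 0 < r ∧ r ≤ 1 ∧ closedBall x r ⊆ U ∧
      F (closedBall x (5 * r)) ≤ c * μ (closedBall x r) := by
    intro x hx
    obtain ⟨ρ, hρ, hρU⟩ := Metric.isOpen_iff.1 hU x (hSU hx)
    obtain ⟨r, hr, hrρ, hF⟩ := h x hx (min 1 ρ) (lt_min one_pos hρ)
    exact ⟨r, hr, (hrρ.trans_le (min_le_left _ _)).le,
      (closedBall_subset_ball (hrρ.trans_le (min_le_right _ _))).trans hρU, hF⟩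
  choose! r hr hr1 hrU hF using h'
  obtain ⟨u, huS, hdisj, hcov⟩ := Vitali.exists_disjoint_subfamily_covering_enlargement_closedBall
    S id r 1 hr1 5 (by norm_num)
  replace hdisj : u.PairwiseDisjoint fun x => closedBall x (r x) := hdisj
  have hcount : u.Countable := hdisj.countable_of_nonempty_interior fun x hx =>
    ⟨x, ball_subset_interior_closedBall (mem_ball_self (hr x (huS hx)))⟩
  calc F S ≤ F (⋃ x ∈ u, closedBall x (5 * r x)) := by
        refine F.mono fun x hx => ?_
        obtain ⟨b, hb, hsub⟩ := hcov x hx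
        exact mem_biUnion hb (hsub (mem_closedBall_self (hr x hx).le))
    _ ≤ ∑' x : u, F (closedBall (x : V) (5 * r x)) :=
        measure_biUnion_le F hcount _
    _ ≤ ∑' x : u, c * μ (closedBall (x : V) (r x)) :=
        ENNReal.tsum_le_tsum fun x => hF x (huS x.2)
    _ = c * μ (⋃ x ∈ u, closedBall x (r x)) := by
        rw [ENNReal.tsum_mul_left, measure_biUnion hcount hdisj
          fun x _ => isClosed_closedBall.measurableSet]
    _ ≤ c * μ U := by
        gcongr
        exact iUnion₂_subset fun x hx => hrU x (huS hx)

/-- Near almost every point of `E`, the set `E` is relatively dense at every scale. -/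
theorem ae_eventually_forall_exists_dist_le {V : Type*} [NormedAddCommGroup V]
    [NormedSpace ℝ V] [FiniteDimensional ℝ V] [MeasurableSpace V] [BorelSpace V]
    (μ : Measure V) [μ.IsAddHaarMeasure] {E : Set V} (hE : MeasurableSet E) :
    ∀ᵐ x ∂μ, x ∈ E → ∀ η > (0 : ℝ), ∀ᶠ r in 𝓝[>] (0 : ℝ), ∀ p ∈ closedBall x r,
      ∃ e ∈ E, dist e p ≤ η * r := by
  rw [← ae_restrict_iff' hE]
  filter_upwards [ae_all_iff.2 fun m : ℕ =>
    IsUnifLocDoublingMeasure.ae_tendsto_measure_inter_div μ E (m : ℝ)] with x hx η hη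
  obtain ⟨m, hm⟩ := exists_nat_ge η⁻¹
  by_contra hcon
  have hp : ∀ r : ℝ, ∃ p, (0 < r → p ∈ closedBall x r) ∧
      ((¬ ∀ p ∈ closedBall x r, ∃ e ∈ E, dist e p ≤ η * r) → ¬ ∃ e ∈ E, dist e p ≤ η * r) := by
    intro r
    by_cases hr : ∀ p ∈ closedBall x r, ∃ e ∈ E, dist e p ≤ η * r
    · exact ⟨x, fun h => mem_closedBall_self h.le, fun h => absurd hr h⟩
    · have hr' := hr
      push Not at hr'
      obtain ⟨p, hp, hpe⟩ := hr'
      exact ⟨p, fun _ => hp, fun _ ⟨e, he, hd⟩ => (hpe e he).not_ge hd⟩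
  choose p hpx hpe using hp
  have key := hx m p (fun r => η * r) (tendsto_const_mul_nhdsGT_zero hη) (by
    filter_upwards [self_mem_nhdsWithin] with r hr
    have h1 := hpx r hr
    rw [mem_closedBall'] at h1
    rw [mem_closedBall]
    have hr0 : (0 : ℝ) < r := hr
    have : 1 ≤ (m : ℝ) * η := by
      calc 1 = η⁻¹ * η := (inv_mul_cancel₀ hη.ne').symm
        _ ≤ m * η := by gcongr
    nlinarith)
  apply hcon
  filter_upwards [key.eventually_ne one_ne_zero] with r hr
  by_contra hr'
  refine hr ?_
  have hempty : E ∩ closedBall (p r) (η * r) = ∅ := by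
    ext e
    simp only [mem_inter_iff, mem_closedBall, mem_empty_iff_false, iff_false]
    exact fun h => hpe r hr' ⟨e, h.1, h.2⟩
  simp [hempty]

theorem exists_pos_le_one_mul_le (T : ℝ) {ε : ℝ} (hε : 0 < ε) :
    ∃ η : ℝ, 0 < η ∧ η ≤ 1 ∧ η * T ≤ ε := by
  refine ⟨min 1 (ε / (|T| + 1)), lt_min one_pos (by positivity), min_le_left _ _, ?_⟩
  have h1 : T ≤ |T| + 1 := by linarith [le_abs_self T]
  calc min 1 (ε / (|T| + 1)) * T ≤ min 1 (ε / (|T| + 1)) * (|T| + 1) := by gcongr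
    _ ≤ ε / (|T| + 1) * (|T| + 1) := by
        gcongr
        exact min_le_right _ _
    _ = ε := by field_simp

section Cocycle

variable {V W : Type*} [NormedAddCommGroup V] [NormedSpace ℝ V]
  [NormedAddCommGroup W] [NormedSpace ℝ W]

theorem HasFDerivWithinAt.eventually_norm_sub_sub_le {E : Set V} {x : V} {z : V → W}
    {A : V →L[ℝ] W} (hA : HasFDerivWithinAt z A E x) {ε : ℝ} (hε : 0 < ε) :
    ∀ᶠ r in 𝓝[>] (0 : ℝ), ∀ y ∈ E ∩ closedBall x r, ∀ w ∈ E ∩ closedBall x r,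
      ‖z w - z y - A (w - y)‖ ≤ ε * r := by
  have h := hA.isLittleO.def (half_pos hε)
  rw [eventually_nhdsWithin_iff, Metric.eventually_nhds_iff] at h
  obtain ⟨ρ, hρ, h⟩ := h
  filter_upwards [Ioo_mem_nhdsGT hρ] with r hr
  have key : ∀ y ∈ E ∩ closedBall x r, ‖z y - z x - A (y - x)‖ ≤ ε / 2 * r := by
    rintro y ⟨hyE, hy⟩
    rw [mem_closedBall] at hy
    refine (h (hy.trans_lt hr.2) hyE).trans ?_
    rw [← dist_eq_norm]
    gcongr
  intro y hy w hw
  have : z w - z y - A (w - y) = (z w - z x - A (w - x)) - (z y - z x - A (y - x)) := by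
    simp only [map_sub]; abel
  rw [this]
  refine (norm_sub_le _ _).trans ?_
  linarith [key y hy, key w hw]

/-- One bisection step: a quadratic bound for `h` near `x` improves by a factor of two. -/
theorem cocycle_bound_half {E : Set V} {x : V} {z : V → W} {A : V →L[ℝ] W}
    {B : W →L[ℝ] W →L[ℝ] ℝ} {h : V → V → ℝ} (hBalt : ∀ u, B u u = 0)
    (hcoc : ∀ y m w, h y w = h y m + h m w + B (z m - z y) (z w - z y))
    (hA : HasFDerivWithinAt z A E x)
    (hD : ∀ η > (0 : ℝ), ∀ᶠ r in 𝓝[>] (0 : ℝ), ∀ p ∈ closedBall x r,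
      ∃ e ∈ E, dist e p ≤ η * r) {K : ℝ} (hK0 : 0 ≤ K)
    (hK : ∀ ε > (0 : ℝ), ∀ᶠ r in 𝓝[>] (0 : ℝ), ∀ y ∈ E ∩ closedBall x r,
      ∀ w ∈ E ∩ closedBall x r, |h y w| ≤ K * dist y w ^ 2 + ε * r ^ 2) :
    ∀ ε > (0 : ℝ), ∀ᶠ r in 𝓝[>] (0 : ℝ), ∀ y ∈ E ∩ closedBall x r,
      ∀ w ∈ E ∩ closedBall x r, |h y w| ≤ K / 2 * dist y w ^ 2 + ε * r ^ 2 := by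
  intro ε hε
  set a := ‖A‖ with ha
  have ha0 : 0 ≤ a := norm_nonneg _
  obtain ⟨η, hη, hη1, hηε⟩ := exists_pos_le_one_mul_le
    (6 * K + 8 + ‖B‖ * (2 * a + 2 * a * (a + 2) + 2 * (a + 2))) hε
  have h2 := tendsto_const_mul_nhdsGT_zero (two_pos : (0 : ℝ) < 2)
  filter_upwards [self_mem_nhdsWithin, hD η hη, h2.eventually (hK η hη),
    h2.eventually (hA.eventually_norm_sub_sub_le hη)] with r hr0 hDr hKr hAr y hy w hw
  replace hr0 : 0 < r := hr0
  have hdy : dist y x ≤ r := hy.2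
  have hdw : dist w x ≤ r := hw.2
  have hs2 : dist y w ≤ 2 * r := by linarith [dist_triangle_right y w x]
  obtain ⟨m, hmE, hm⟩ := hDr (midpoint ℝ y w)
    ((convex_closedBall x r).midpoint_mem hy.2 hw.2)
  have hmy : dist y m ≤ dist y w / 2 + η * r := by
    have := dist_triangle y (midpoint ℝ y w) m
    rw [dist_left_midpoint, dist_comm (midpoint ℝ y w) m] at this
    norm_num at this
    linarith
  have hmw : dist m w ≤ dist y w / 2 + η * r := by
    have := dist_triangle m (midpoint ℝ y w) w
    rw [dist_midpoint_right] at this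
    norm_num at this
    linarith
  have hmx : dist m x ≤ 2 * r := by
    have h1 : dist (midpoint ℝ y w) x ≤ r := (convex_closedBall x r).midpoint_mem hy.2 hw.2
    have := dist_triangle m (midpoint ℝ y w) x
    nlinarith
  have hsub : E ∩ closedBall x r ⊆ E ∩ closedBall x (2 * r) :=
    inter_subset_inter_right _ (closedBall_subset_closedBall (by linarith))
  have hm2 : m ∈ E ∩ closedBall x (2 * r) := ⟨hmE, hmx⟩
  have hb1 := hKr y (hsub hy) m hm2
  have hb2 := hKr m hm2 w (hsub hw)
  set u := A (w - y) with hu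
  set e' := z w - z y - A (w - y) with he'
  set e := z m - z y - (2⁻¹ : ℝ) • u with he
  have hu_le : ‖u‖ ≤ a * (2 * r) := by
    refine (A.le_opNorm _).trans ?_
    rw [← dist_eq_norm, dist_comm]
    gcongr
  have he'_le : ‖e'‖ ≤ η * (2 * r) := hAr y (hsub hy) w (hsub hw)
  have he_le : ‖e‖ ≤ (a + 2) * (η * r) := by
    have heq : e = (z m - z y - A (m - y)) + A (m - midpoint ℝ y w) := by
      have : midpoint ℝ y w = y + (2⁻¹ : ℝ) • (w - y) := by
        rw [midpoint_eq_smul_add, invOf_eq_inv]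
        module
      rw [he, hu, this, ← map_smul]
      simp only [map_sub, map_add]
      abel
    rw [heq]
    have h1 := hAr y (hsub hy) m hm2
    have h3 : ‖A (m - midpoint ℝ y w)‖ ≤ a * (η * r) := by
      refine (A.le_opNorm _).trans ?_
      rw [← dist_eq_norm]
      gcongr
    refine (norm_add_le _ _).trans ?_
    linarith
  have hBexp : B (z m - z y) (z w - z y) = 2⁻¹ * B u e' + B e u + B e e' := by
    have h1 : z m - z y = (2⁻¹ : ℝ) • u + e := by rw [he]; abel
    have h3 : z w - z y = u + e' := by rw [he']; abel
    rw [h1, h3]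
    simp [hBalt]
    ring
  have hB : ∀ p q : W, ∀ b c : ℝ, ‖p‖ ≤ b → ‖q‖ ≤ c → |B p q| ≤ ‖B‖ * (b * c) := by
    intro p q b c hp hq
    have hb : 0 ≤ b := (norm_nonneg _).trans hp
    calc |B p q| ≤ ‖B‖ * ‖p‖ * ‖q‖ := B.le_opNorm₂ p q
      _ ≤ ‖B‖ * b * c := by gcongr
      _ = _ := by ring
  have hBbd : |B (z m - z y) (z w - z y)| ≤
      ‖B‖ * (2 * a + 2 * a * (a + 2) + 2 * (a + 2)) * (η * r ^ 2) := by
    rw [hBexp]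
    have h1 := hB _ _ _ _ hu_le he'_le
    have h3 := hB _ _ _ _ he_le hu_le
    have h4 := hB _ _ _ _ he_le he'_le
    have h5 : |2⁻¹ * B u e' + B e u + B e e'| ≤ 2⁻¹ * |B u e'| + |B e u| + |B e e'| := by
      refine (abs_add_le _ _).trans ?_
      gcongr
      refine (abs_add_le _ _).trans ?_
      rw [abs_mul, abs_of_pos (by norm_num : (0 : ℝ) < 2⁻¹)]
    have h6 : ‖B‖ * ((a + 2) * (η * r) * (η * (2 * r))) ≤
        ‖B‖ * (2 * (a + 2) * (η * r ^ 2)) := by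
      refine mul_le_mul_of_nonneg_left ?_ (norm_nonneg B)
      have : η * ((a + 2) * η * r ^ 2) ≤ 1 * ((a + 2) * η * r ^ 2) := by gcongr
      linarith
    linarith
  have hq : ∀ d, 0 ≤ d → d ≤ dist y w / 2 + η * r →
      K * d ^ 2 ≤ K * dist y w ^ 2 / 4 + 3 * K * (η * r ^ 2) := by
    intro d hd0 hd
    have h1 : d ^ 2 ≤ (dist y w / 2 + η * r) ^ 2 := by gcongr
    have h3 : (dist y w / 2 + η * r) ^ 2 ≤ dist y w ^ 2 / 4 + 3 * (η * r ^ 2) := by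
      have h4 : dist y w * (η * r) ≤ 2 * r * (η * r) := by gcongr
      have h5 : η * (η * r ^ 2) ≤ 1 * (η * r ^ 2) := by gcongr
      nlinarith
    calc K * d ^ 2 ≤ K * (dist y w ^ 2 / 4 + 3 * (η * r ^ 2)) := by
          gcongr
          exact h1.trans h3
      _ = _ := by ring
  have hq1 := hq _ dist_nonneg hmy
  have hq2 := hq _ dist_nonneg hmw
  have hfin : η * (6 * K + 8 + ‖B‖ * (2 * a + 2 * a * (a + 2) + 2 * (a + 2))) * r ^ 2 ≤
      ε * r ^ 2 := by gcongr
  rw [hcoc y m w]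
  refine (abs_add_three _ _ _).trans ?_
  linarith

/-- A cocycle with a quadratic bound is `o(r ^ 2)` at density points of differentiability. -/
theorem cocycle_isLittleO {E : Set V} {x : V} {z : V → W} {A : V →L[ℝ] W}
    {B : W →L[ℝ] W →L[ℝ] ℝ} {h : V → V → ℝ} (hBalt : ∀ u, B u u = 0)
    (hcoc : ∀ y m w, h y w = h y m + h m w + B (z m - z y) (z w - z y))
    (hA : HasFDerivWithinAt z A E x)
    (hD : ∀ η > (0 : ℝ), ∀ᶠ r in 𝓝[>] (0 : ℝ), ∀ p ∈ closedBall x r,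
      ∃ e ∈ E, dist e p ≤ η * r) {K : ℝ} (hK0 : 0 ≤ K)
    (hK : ∀ y ∈ E, ∀ w ∈ E, |h y w| ≤ K * dist y w ^ 2) :
    ∀ ε > (0 : ℝ), ∀ᶠ r in 𝓝[>] (0 : ℝ), ∀ y ∈ E ∩ closedBall x r,
      ∀ w ∈ E ∩ closedBall x r, |h y w| ≤ ε * r ^ 2 := by
  have hpow : ∀ j : ℕ, ∀ ε > (0 : ℝ), ∀ᶠ r in 𝓝[>] (0 : ℝ), ∀ y ∈ E ∩ closedBall x r,
      ∀ w ∈ E ∩ closedBall x r, |h y w| ≤ K / 2 ^ j * dist y w ^ 2 + ε * r ^ 2 := by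
    intro j
    induction j with
    | zero =>
      intro ε hε
      refine Eventually.of_forall fun r y hy w hw => ?_
      have := hK y hy.1 w hw.1
      have h0 : 0 ≤ ε * r ^ 2 := by positivity
      rw [pow_zero, div_one]
      linarith
    | succ j ih =>
      have := cocycle_bound_half hBalt hcoc hA hD (by positivity) ih
      rwa [div_div, ← pow_succ] at this
  intro ε hε
  obtain ⟨j, hj⟩ := exists_pow_lt_of_lt_one (y := 1 / 2)
    (show 0 < ε / (8 * (K + 1)) by positivity) (by norm_num)
  have hj' : K / 2 ^ j * 4 ≤ ε / 2 := by
    rw [one_div, inv_pow, lt_div_iff₀ (by positivity)] at hj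
    have : 0 < ((2 : ℝ) ^ j)⁻¹ := by positivity
    rw [div_eq_mul_inv]
    nlinarith
  filter_upwards [hpow j (ε / 2) (by positivity)] with r hr y hy w hw
  have hdy : dist y x ≤ r := hy.2
  have hdw : dist w x ≤ r := hw.2
  have hs2 : dist y w ≤ 2 * r := by linarith [dist_triangle_right y w x]
  calc |h y w| ≤ K / 2 ^ j * dist y w ^ 2 + ε / 2 * r ^ 2 := hr y hy w hw
    _ ≤ K / 2 ^ j * (2 * r) ^ 2 + ε / 2 * r ^ 2 := by gcongr
    _ = (K / 2 ^ j * 4) * r ^ 2 + ε / 2 * r ^ 2 := by ring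
    _ ≤ ε / 2 * r ^ 2 + ε / 2 * r ^ 2 := by gcongr
    _ = ε * r ^ 2 := by ring

/-- The derivative at a density point takes values in a `B`-isotropic subspace. -/
theorem isotropic_of_cocycle_isLittleO {E : Set V} {x : V} (hx : x ∈ E) {z : V → W}
    {A : V →L[ℝ] W} {B : W →L[ℝ] W →L[ℝ] ℝ} {h : V → V → ℝ}
    (hcoc : ∀ y m w, h y w = h y m + h m w + B (z m - z y) (z w - z y))
    (hA : HasFDerivWithinAt z A E x)
    (hD : ∀ η > (0 : ℝ), ∀ᶠ r in 𝓝[>] (0 : ℝ), ∀ p ∈ closedBall x r,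
      ∃ e ∈ E, dist e p ≤ η * r)
    (hsmall : ∀ ε > (0 : ℝ), ∀ᶠ r in 𝓝[>] (0 : ℝ), ∀ y ∈ E ∩ closedBall x r,
      ∀ w ∈ E ∩ closedBall x r, |h y w| ≤ ε * r ^ 2) (u v : V) :
    B (A u) (A v) = 0 := by
  -- choose points of `E` approximating the directions `u` and `v` at a common scale
  set R := ‖u‖ + ‖v‖ + 1 with hR
  have hR0 : 0 < R := by positivity
  have hstep : ∀ η : ℝ, 0 < η → ∃ r : ℝ, 0 < r ∧ r < η ∧ ∃ y ∈ E, ∃ w ∈ E,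
      ‖r⁻¹ • (y - x) - u‖ ≤ η ∧ ‖r⁻¹ • (w - x) - v‖ ≤ η ∧
      |(r⁻¹ * r⁻¹) * B (z y - z x) (z w - z x)| ≤ η := by
    intro η hη
    have hη' : 0 < min 1 η / R := by positivity
    have hε : 0 < η / (3 * (2 * R) ^ 2) := by positivity
    have hsc := tendsto_const_mul_nhdsGT_zero hR0
    have hsc2 := tendsto_const_mul_nhdsGT_zero (show 0 < 2 * R by positivity)
    obtain ⟨r, hDr, hsr, hr⟩ := ((hsc.eventually (hD _ hη')).and
      ((hsc2.eventually (hsmall _ hε)).and (Ioo_mem_nhdsGT hη))).exists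
    have hr0 : 0 < r := hr.1
    have happ : ∀ q : V, ‖q‖ ≤ R → ∃ y ∈ E, ‖r⁻¹ • (y - x) - q‖ ≤ η ∧
        y ∈ closedBall x (2 * R * r) := by
      intro q hq
      obtain ⟨y, hyE, hy⟩ := hDr (x + r • q) (by
        rw [mem_closedBall, dist_eq_norm, add_sub_cancel_left, norm_smul,
          Real.norm_of_nonneg hr0.le, mul_comm]
        gcongr)
      have hy' : ‖y - x - r • q‖ ≤ min 1 η * r := by
        rw [dist_eq_norm, sub_add_eq_sub_sub] at hy
        refine hy.trans (le_of_eq ?_)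
        field_simp
      refine ⟨y, hyE, ?_, ?_⟩
      · have : r⁻¹ • (y - x) - q = r⁻¹ • (y - x - r • q) := by
          rw [smul_sub r⁻¹ (y - x), inv_smul_smul₀ hr0.ne']
        rw [this, norm_smul, norm_inv, Real.norm_of_nonneg hr0.le, inv_mul_le_iff₀ hr0, mul_comm]
        refine hy'.trans ?_
        gcongr
        exact min_le_right _ _
      · rw [mem_closedBall, dist_eq_norm]
        have h1 : ‖y - x‖ ≤ ‖y - x - r • q‖ + ‖r • q‖ := norm_le_norm_sub_add _ _
        rw [norm_smul, Real.norm_of_nonneg hr0.le] at h1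
        have h2 : min 1 η * r ≤ 1 * r := by gcongr; exact min_le_left _ _
        have h3 : r * ‖q‖ ≤ r * R := by gcongr
        have h4 : 1 ≤ R := by rw [hR]; linarith [norm_nonneg u, norm_nonneg v]
        nlinarith
    obtain ⟨y, hyE, hy, hyb⟩ := happ u (by rw [hR]; linarith [norm_nonneg u, norm_nonneg v])
    obtain ⟨w, hwE, hw, hwb⟩ := happ v (by rw [hR]; linarith [norm_nonneg u, norm_nonneg v])
    refine ⟨r, hr0, hr.2, y, hyE, w, hwE, hy, hw, ?_⟩
    have hxb : x ∈ closedBall x (2 * R * r) := mem_closedBall_self (by positivity)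
    have h1 := hsr x ⟨hx, hxb⟩ w ⟨hwE, hwb⟩
    have h2 := hsr x ⟨hx, hxb⟩ y ⟨hyE, hyb⟩
    have h3 := hsr y ⟨hyE, hyb⟩ w ⟨hwE, hwb⟩
    have hB : |B (z y - z x) (z w - z x)| ≤ η * r ^ 2 := by
      have hrw : B (z y - z x) (z w - z x) = h x w - h x y - h y w := by
        rw [hcoc x y w]; ring
      have heq : η / (3 * (2 * R) ^ 2) * (2 * R * r) ^ 2 = η * r ^ 2 / 3 := by field_simp
      rw [heq] at h1 h2 h3
      rw [hrw]
      refine (abs_sub _ _).trans ?_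
      have := abs_sub (h x w) (h x y)
      linarith
    rw [abs_mul, abs_of_pos (by positivity)]
    calc r⁻¹ * r⁻¹ * |B (z y - z x) (z w - z x)| ≤ r⁻¹ * r⁻¹ * (η * r ^ 2) := by gcongr
      _ = η := by field_simp
  have hη : ∀ j : ℕ, (0 : ℝ) < 1 / ((j : ℝ) + 1) := fun j => by positivity
  choose r hr0 hrη y hyE w hwE hy hw hB using fun j : ℕ => hstep _ (hη j)
  have hlim0 := tendsto_one_div_add_atTop_nhds_zero_nat (𝕜 := ℝ)
  have hr : Tendsto r atTop (𝓝 0) :=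
    squeeze_zero (fun j => (hr0 j).le) (fun j => (hrη j).le) hlim0
  have hdir : ∀ (e : ℕ → V) (q : V), (∀ j, e j ∈ E) →
      (∀ j : ℕ, ‖(r j)⁻¹ • (e j - x) - q‖ ≤ 1 / ((j : ℝ) + 1)) →
      Tendsto (fun j => (r j)⁻¹ • (z (e j) - z x)) atTop (𝓝 (A q)) := by
    intro e q heE he
    have h1 : Tendsto (fun j => (r j)⁻¹ • (e j - x)) atTop (𝓝 q) :=
      tendsto_iff_norm_sub_tendsto_zero.2
        (squeeze_zero (fun j => norm_nonneg _) he hlim0)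
    have h2 : Tendsto (fun j => e j - x) atTop (𝓝 0) := by
      have := hr.smul h1
      rw [zero_smul] at this
      refine this.congr fun j => ?_
      rw [smul_inv_smul₀ (hr0 j).ne']
    have := hA.lim h2 (Eventually.of_forall fun j => by simpa using heE j) h1
    simpa using this
  have hlim := (B.isBoundedBilinearMap.continuous.tendsto (A u, A v)).comp
    ((hdir y u hyE hy).prodMk_nhds (hdir w v hwE hw))
  refine tendsto_nhds_unique hlim ?_
  refine squeeze_zero_norm (fun j => ?_) hlim0
  have := hB j
  simpa [mul_assoc] using this

end Cocycle

/-- A ball can be cut into `(2 * M + 1) ^ rank A` pieces whose images under a linear map `A`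
have diameter of order `r / M`. -/
theorem ContinuousLinearMap.exists_cover_closedBall {V W : Type*} [NormedAddCommGroup V]
    [NormedSpace ℝ V] [FiniteDimensional ℝ V] [NormedAddCommGroup W] [NormedSpace ℝ W]
    (A : V →L[ℝ] W) :
    ∃ C : ℝ, 0 ≤ C ∧ ∀ M : ℕ, 0 < M → ∀ r : ℝ, 0 < r → ∀ x : V,
      ∃ P : (Fin (finrank ℝ A.range) → Fin (2 * M + 1)) → Set V,
        closedBall x r ⊆ ⋃ i, P i ∧ ∀ i, ∀ y ∈ P i, ∀ w ∈ P i, ‖A (w - y)‖ ≤ C * r / M := by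
  let b := finBasis ℝ A.range
  let T : V →L[ℝ] (Fin (finrank ℝ A.range) → ℝ) :=
    LinearMap.toContinuousLinearMap
      (b.equivFun.toLinearMap ∘ₗ (A : V →ₗ[ℝ] W).rangeRestrict)
  let A' : (Fin (finrank ℝ A.range) → ℝ) →L[ℝ] W :=
    LinearMap.toContinuousLinearMap
      (A.range.subtype ∘ₗ b.equivFun.symm.toLinearMap)
  have hfac : ∀ v, A v = A' (T v) := by
    intro v
    simp [A', T]
  set τ := ‖T‖ + 1 with hτ
  have hτ0 : 0 < τ := by positivity
  refine ⟨‖A'‖ * τ, by positivity, fun M hM r hr x => ?_⟩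
  have hM0 : (0 : ℝ) < M := by exact_mod_cast hM
  have hs0 : 0 < M / (τ * r) := by positivity
  refine ⟨fun i => {y | ∀ j, ⌊T (y - x) j * (M / (τ * r))⌋ + M = (i j : ℕ)}, ?_, ?_⟩
  · intro y hy
    have hT : ∀ j, |T (y - x) j * (M / (τ * r))| ≤ M := by
      intro j
      have h1 : |T (y - x) j| ≤ τ * r := by
        rw [mem_closedBall, dist_eq_norm] at hy
        calc |T (y - x) j| ≤ ‖T (y - x)‖ := norm_le_pi_norm (T (y - x)) j
          _ ≤ ‖T‖ * ‖y - x‖ := T.le_opNorm _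
          _ ≤ τ * r := by
            gcongr
            rw [hτ]; linarith
      rw [abs_mul, abs_of_pos hs0]
      calc |T (y - x) j| * (M / (τ * r)) ≤ τ * r * (M / (τ * r)) := by gcongr
        _ = M := by field_simp
    have hfl : ∀ j, 0 ≤ ⌊T (y - x) j * (M / (τ * r))⌋ + M ∧
        ⌊T (y - x) j * (M / (τ * r))⌋ + M < 2 * M + 1 := by
      intro j
      obtain ⟨h1, h2⟩ := abs_le.1 (hT j)
      have h3 : -(M : ℤ) ≤ ⌊T (y - x) j * (M / (τ * r))⌋ := Int.le_floor.2 (by push_cast; exact h1)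
      have h4 : ⌊T (y - x) j * (M / (τ * r))⌋ ≤ M := by
        have := Int.floor_mono h2
        simpa using this
      constructor <;> linarith
    refine mem_iUnion.2 ⟨fun j => ⟨(⌊T (y - x) j * (M / (τ * r))⌋ + M).toNat, ?_⟩, fun j => ?_⟩
    · have := hfl j
      omega
    · have := hfl j
      simp only
      omega
  · intro i y hy w hw
    have hT : ‖T (w - y)‖ ≤ τ * r / M := by
      refine (pi_norm_le_iff_of_nonneg (by positivity)).2 fun j => ?_
      have h1 : ⌊T (w - x) j * (M / (τ * r))⌋ = ⌊T (y - x) j * (M / (τ * r))⌋ := by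
        have := hy j
        have := hw j
        omega
      have h2 := Int.abs_sub_lt_one_of_floor_eq_floor h1
      rw [← sub_mul, abs_mul, abs_of_pos hs0] at h2
      have h3 : T (w - y) j = T (w - x) j - T (y - x) j := by
        simp only [map_sub, Pi.sub_apply]; ring
      rw [Real.norm_eq_abs, h3, le_div_iff₀ hM0]
      rw [← mul_div_assoc, div_lt_one (by positivity)] at h2
      exact h2.le
    rw [hfac]
    calc ‖A' (T (w - y))‖ ≤ ‖A'‖ * ‖T (w - y)‖ := A'.le_opNorm _
      _ ≤ ‖A'‖ * (τ * r / M) := by gcongr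
      _ = ‖A'‖ * τ * r / M := by ring

namespace Heis

/-- The space of horizontal coordinates, with the `x`- and `y`-coordinates separated. -/
abbrev Plane (n : ℕ) := EuclideanSpace ℝ (Fin n ⊕ Fin n)

/-- The horizontal coordinates of a point. -/
def horizontal (n : ℕ) (p : Heis n) : Plane n :=
  WithLp.toLp 2 (Sum.elim (fun j => p (xIdx n j)) (fun j => p (yIdx n j)))

/-- The vertical component of `q⁻¹ * p`. -/
def vertical (n : ℕ) (q p : Heis n) : ℝ :=
  p (tIdx n) - q (tIdx n)
    + 2 * ∑ j : Fin n, (q (xIdx n j) * p (yIdx n j) - p (xIdx n j) * q (yIdx n j))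

/-- The multiple `-2ω` of the standard symplectic form. -/
def form (n : ℕ) : Plane n →ₗ[ℝ] Plane n →ₗ[ℝ] ℝ :=
  LinearMap.mk₂ ℝ
    (fun u v => 2 * ∑ j : Fin n, (v (Sum.inl j) * u (Sum.inr j) - u (Sum.inl j) * v (Sum.inr j)))
    (fun u u' v => by
      rw [← mul_add, ← Finset.sum_add_distrib]
      congr 1
      refine Finset.sum_congr rfl fun j _ => ?_
      simp only [PiLp.add_apply]; ring)
    (fun c u v => by
      simp only [PiLp.smul_apply, smul_eq_mul, Finset.mul_sum]
      refine Finset.sum_congr rfl fun j _ => ?_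
      ring)
    (fun u v v' => by
      rw [← mul_add, ← Finset.sum_add_distrib]
      congr 1
      refine Finset.sum_congr rfl fun j _ => ?_
      simp only [PiLp.add_apply]; ring)
    (fun c u v => by
      simp only [PiLp.smul_apply, smul_eq_mul, Finset.mul_sum]
      refine Finset.sum_congr rfl fun j _ => ?_
      ring)

theorem form_apply (n : ℕ) (u v : Plane n) : form n u v =
    2 * ∑ j : Fin n, (v (Sum.inl j) * u (Sum.inr j) - u (Sum.inl j) * v (Sum.inr j)) := rfl

theorem form_self (n : ℕ) (u : Plane n) : form n u u = 0 := by
  rw [form_apply]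
  simp [mul_comm]

theorem form_ker (n : ℕ) : (form n).ker = ⊥ := by
  refine (LinearMap.ker_eq_bot').2 fun u hu => ?_
  have h := congrArg (fun g : Plane n →ₗ[ℝ] ℝ => g
    (WithLp.toLp 2 (Sum.elim (fun j => u (Sum.inr j)) (fun j => - u (Sum.inl j))))) hu
  simp only [form_apply, LinearMap.zero_apply, Sum.elim_inl, Sum.elim_inr, mul_neg,
    sub_neg_eq_add, mul_eq_zero, OfNat.ofNat_ne_zero, false_or] at h
  have hnn : ∀ j ∈ Finset.univ, 0 ≤ u (Sum.inr j) * u (Sum.inr j) + u (Sum.inl j) * u (Sum.inl j) :=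
    fun j _ => add_nonneg (mul_self_nonneg _) (mul_self_nonneg _)
  have hz := (Finset.sum_eq_zero_iff_of_nonneg hnn).1 h
  ext (j | j)
  · have := hz j (Finset.mem_univ j)
    simp only [PiLp.zero_apply]
    nlinarith [mul_self_nonneg (u (Sum.inr j)), mul_self_nonneg (u (Sum.inl j))]
  · have := hz j (Finset.mem_univ j)
    simp only [PiLp.zero_apply]
    nlinarith [mul_self_nonneg (u (Sum.inr j)), mul_self_nonneg (u (Sum.inl j))]

/-- Isotropic subspaces have at most half the dimension. -/
theorem finrank_le_of_isotropic (n : ℕ) (S : Submodule ℝ (Plane n))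
    (hS : ∀ u ∈ S, ∀ v ∈ S, form n u v = 0) : finrank ℝ S ≤ n := by
  have h := LinearMap.BilinForm.finrank_add_finrank_orthogonal' (B := form n) S
  rw [form_ker, inf_bot_eq, finrank_bot, add_zero] at h
  have hle : S ≤ LinearMap.BilinForm.orthogonal (form n) S := fun u hu v hv => hS v hv u hu
  have h1 := Submodule.finrank_mono hle
  have h2 : finrank ℝ (Plane n) = n + n := by simp
  omega

theorem vertical_cocycle (n : ℕ) (q m p : Heis n) :
    vertical n q p = vertical n q m + vertical n m p +
      form n (horizontal n m - horizontal n q) (horizontal n p - horizontal n q) := by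
  have hsum : ∑ j : Fin n, (q (xIdx n j) * p (yIdx n j) - p (xIdx n j) * q (yIdx n j)) =
      ∑ j : Fin n, (q (xIdx n j) * m (yIdx n j) - m (xIdx n j) * q (yIdx n j)) +
      ∑ j : Fin n, (m (xIdx n j) * p (yIdx n j) - p (xIdx n j) * m (yIdx n j)) +
      ∑ j : Fin n, ((p (xIdx n j) - q (xIdx n j)) * (m (yIdx n j) - q (yIdx n j))
        - (m (xIdx n j) - q (xIdx n j)) * (p (yIdx n j) - q (yIdx n j))) := by
    rw [← Finset.sum_add_distrib, ← Finset.sum_add_distrib]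
    refine Finset.sum_congr rfl fun j _ => ?_
    ring
  simp only [vertical, form_apply, horizontal, PiLp.sub_apply, Sum.elim_inl, Sum.elim_inr]
  rw [hsum]
  ring

theorem dK_eq (n : ℕ) (p q : Heis n) : dK n p q =
    (‖horizontal n p - horizontal n q‖ ^ 4 + vertical n q p ^ 2) ^ ((1 : ℝ) / 4) := by
  have h : ‖horizontal n p - horizontal n q‖ ^ 4 = (∑ j : Fin n,
      ((p (xIdx n j) - q (xIdx n j)) ^ 2 + (p (yIdx n j) - q (yIdx n j)) ^ 2)) ^ 2 := by
    have h2 : ‖horizontal n p - horizontal n q‖ ^ 2 = ∑ j : Fin n,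
        ((p (xIdx n j) - q (xIdx n j)) ^ 2 + (p (yIdx n j) - q (yIdx n j)) ^ 2) := by
      rw [EuclideanSpace.norm_sq_eq, Fintype.sum_sum_type, ← Finset.sum_add_distrib]
      simp [horizontal]
    rw [← h2]; ring
  rw [h]
  rfl

theorem dK_nonneg (n : ℕ) (p q : Heis n) : 0 ≤ dK n p q := by
  rw [dK_eq]; positivity

theorem dK_pow_four (n : ℕ) (p q : Heis n) :
    dK n p q ^ 4 = ‖horizontal n p - horizontal n q‖ ^ 4 + vertical n q p ^ 2 := by
  rw [dK_eq, ← Real.rpow_natCast, ← Real.rpow_mul (by positivity)]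
  norm_num

theorem norm_horizontal_sub_le_dK (n : ℕ) (p q : Heis n) :
    ‖horizontal n p - horizontal n q‖ ≤ dK n p q := by
  refine le_of_pow_le_pow_left₀ (n := 4) (by norm_num) (dK_nonneg n p q) ?_
  rw [dK_pow_four]
  nlinarith [sq_nonneg (vertical n q p)]

theorem abs_vertical_le_dK_sq (n : ℕ) (p q : Heis n) : |vertical n q p| ≤ dK n p q ^ 2 := by
  refine abs_le_of_sq_le_sq ?_ (sq_nonneg _)
  rw [← pow_mul, dK_pow_four]
  have : 0 ≤ ‖horizontal n p - horizontal n q‖ ^ 4 := by positivity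
  linarith

theorem dK_le (n : ℕ) {p q : Heis n} {a b : ℝ} (ha : ‖horizontal n p - horizontal n q‖ ≤ a)
    (hb : 0 ≤ b) (h : |vertical n q p| ≤ b ^ 2) : dK n p q ≤ a + b := by
  have ha0 : 0 ≤ a := (norm_nonneg _).trans ha
  refine le_of_pow_le_pow_left₀ (n := 4) (by norm_num) (by positivity) ?_
  rw [dK_pow_four]
  have h1 : ‖horizontal n p - horizontal n q‖ ^ 4 ≤ a ^ 4 := by gcongr
  have h2 : vertical n q p ^ 2 ≤ b ^ 4 := by
    calc vertical n q p ^ 2 = |vertical n q p| ^ 2 := (sq_abs _).symm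
      _ ≤ (b ^ 2) ^ 2 := by gcongr
      _ = b ^ 4 := by ring
  have h3 : 0 ≤ 4 * a ^ 3 * b + 6 * a ^ 2 * b ^ 2 + 4 * a * b ^ 3 := by positivity
  nlinarith

theorem kDiam_le (n : ℕ) {U : Set (Heis n)} {D : ℝ} (h : ∀ p ∈ U, ∀ q ∈ U, dK n p q ≤ D) :
    kDiam n U ≤ ENNReal.ofReal D :=
  iSup₂_le fun p hp => iSup₂_le fun q hq => ENNReal.ofReal_le_ofReal (h p hp q hq)

theorem kDiam_empty_pow (n : ℕ) {k : ℕ} (hk : k ≠ 0) : kDiam n ∅ ^ k = 0 := by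
  simp [kDiam, hk]

/-- The `k`-dimensional Hausdorff content of the Korányi distance. -/
noncomputable def content (n : ℕ) {k : ℕ} (hk : k ≠ 0) : OuterMeasure (Heis n) :=
  OuterMeasure.ofFunction (fun U => kDiam n U ^ k) (kDiam_empty_pow n hk)

theorem isHausdorffNullK_of_content_eq_zero (n : ℕ) {k : ℕ} (hk : k ≠ 0) {S : Set (Heis n)}
    (h : content n hk S = 0) : IsHausdorffNullK n k S := by
  intro ε hε
  rw [← h, content, OuterMeasure.ofFunction_apply] at hε
  simpa only [iInf_lt_iff, exists_prop] using hε

theorem content_le (n : ℕ) {k : ℕ} (hk : k ≠ 0) {U : Set (Heis n)} {D : ℝ} (hD : 0 ≤ D)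
    (h : ∀ p ∈ U, ∀ q ∈ U, dK n p q ≤ D) : content n hk U ≤ ENNReal.ofReal (D ^ k) := by
  rw [ENNReal.ofReal_pow hD]
  exact (OuterMeasure.ofFunction_le U).trans (pow_le_pow_left' (kDiam_le n h) k)

/-- The content of images of subsets of `E`. -/
noncomputable def imageContent (n : ℕ) {k : ℕ} (hk : k ≠ 0) (f : EuclideanSpace ℝ (Fin k) → Heis n)
    (E : Set (EuclideanSpace ℝ (Fin k))) : OuterMeasure (EuclideanSpace ℝ (Fin k)) :=
  OuterMeasure.restrict E (OuterMeasure.comap f (content n hk))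

theorem imageContent_apply (n : ℕ) {k : ℕ} (hk : k ≠ 0) (f : EuclideanSpace ℝ (Fin k) → Heis n)
    (E S : Set (EuclideanSpace ℝ (Fin k))) :
    imageContent n hk f E S = content n hk (f '' (S ∩ E)) := by
  rw [imageContent, OuterMeasure.restrict_apply, OuterMeasure.comap_apply]

theorem imageContent_le (n : ℕ) {k : ℕ} (hk : k ≠ 0) {f : EuclideanSpace ℝ (Fin k) → Heis n}
    {E S : Set (EuclideanSpace ℝ (Fin k))} {D : ℝ} (hD : 0 ≤ D)
    (h : ∀ y ∈ S ∩ E, ∀ w ∈ S ∩ E, dK n (f y) (f w) ≤ D) :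
    imageContent n hk f E S ≤ ENNReal.ofReal (D ^ k) := by
  rw [imageContent_apply]
  refine content_le n hk hD ?_
  rintro _ ⟨y, hy, rfl⟩ _ ⟨w, hw, rfl⟩
  exact h y hy w hw

/-- At a point where the derivative of the horizontal part has rank less than `k` and the
vertical part is `o(r ^ 2)`, the content of the image of a ball of radius `r` is `o(r ^ k)`. -/
theorem eventually_imageContent_closedBall_le (n : ℕ) {k : ℕ} (hk : k ≠ 0)
    {f : EuclideanSpace ℝ (Fin k) → Heis n} {E : Set (EuclideanSpace ℝ (Fin k))}
    {x : EuclideanSpace ℝ (Fin k)} {A : EuclideanSpace ℝ (Fin k) →L[ℝ] Plane n}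
    (hA : HasFDerivWithinAt (fun y => horizontal n (f y)) A E x)
    (hrank : finrank ℝ A.range < k)
    (hsmall : ∀ ε > (0 : ℝ), ∀ᶠ r in 𝓝[>] (0 : ℝ), ∀ y ∈ E ∩ closedBall x r,
      ∀ w ∈ E ∩ closedBall x r, |vertical n (f y) (f w)| ≤ ε * r ^ 2) {c : ℝ} (hc : 0 < c) :
    ∀ᶠ r in 𝓝[>] (0 : ℝ), imageContent n hk f E (closedBall x r) ≤ ENNReal.ofReal (c * r ^ k) := by
  obtain ⟨C, hC, hcover⟩ := A.exists_cover_closedBall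
  set m := finrank ℝ A.range with hm
  obtain ⟨M, hM⟩ := exists_nat_gt (3 ^ m * (C + 2) ^ k / c)
  have hM0 : (0 : ℝ) < M := lt_of_le_of_lt (by positivity) hM
  have hMpos : 0 < M := by exact_mod_cast hM0
  filter_upwards [self_mem_nhdsWithin, hsmall (((M : ℝ)⁻¹) ^ 2) (by positivity),
    hA.eventually_norm_sub_sub_le (inv_pos.2 hM0)] with r hr0 hver hhor
  replace hr0 : 0 < r := hr0
  obtain ⟨P, hP, hdiam⟩ := hcover M hMpos r hr0 x
  have hpiece : ∀ i, imageContent n hk f E (P i ∩ closedBall x r) ≤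
      ENNReal.ofReal (((C + 2) * r / M) ^ k) := by
    intro i
    refine imageContent_le n hk (by positivity) ?_
    rintro y ⟨⟨hyP, hyb⟩, hyE⟩ w ⟨⟨hwP, hwb⟩, hwE⟩
    have h1 := hhor w ⟨hwE, hwb⟩ y ⟨hyE, hyb⟩
    have h2 := hdiam i w hwP y hyP
    have h3 := hver w ⟨hwE, hwb⟩ y ⟨hyE, hyb⟩
    have h4 : ‖horizontal n (f y) - horizontal n (f w)‖ ≤ (M : ℝ)⁻¹ * r + C * r / M :=
      (norm_le_norm_sub_add _ (A (y - w))).trans (add_le_add h1 h2)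
    rw [← mul_pow] at h3
    refine (dK_le n h4 (by positivity) h3).trans (le_of_eq ?_)
    field_simp
    ring
  calc imageContent n hk f E (closedBall x r)
      ≤ imageContent n hk f E (⋃ i, P i ∩ closedBall x r) := by
        refine (imageContent n hk f E).mono fun y hy => ?_
        obtain ⟨i, hi⟩ := mem_iUnion.1 (hP hy)
        exact mem_iUnion.2 ⟨i, hi, hy⟩
    _ ≤ ∑ i, imageContent n hk f E (P i ∩ closedBall x r) :=
        measure_iUnion_fintype_le _ _
    _ ≤ ∑ _i : Fin m → Fin (2 * M + 1), ENNReal.ofReal (((C + 2) * r / M) ^ k) :=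
        Finset.sum_le_sum fun i _ => hpiece i
    _ = ENNReal.ofReal ((2 * M + 1) ^ m * ((C + 2) * r / M) ^ k) := by
        rw [Finset.sum_const, Finset.card_univ, Fintype.card_fun, Fintype.card_fin,
          Fintype.card_fin, nsmul_eq_mul, ENNReal.ofReal_mul (by positivity)]
        congr 1
        rw [← ENNReal.ofReal_natCast]
        push_cast
        rfl
    _ ≤ ENNReal.ofReal (c * r ^ k) := by
        refine ENNReal.ofReal_le_ofReal ?_
        have hM1 : (1 : ℝ) ≤ M := by exact_mod_cast hMpos
        have h1 : ((2 : ℝ) * M + 1) ^ m ≤ 3 ^ m * M ^ m := by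
          rw [← mul_pow]
          gcongr
          linarith
        have h2 : (M : ℝ) ^ m * M ≤ M ^ k := by
          rw [← pow_succ]
          exact pow_le_pow_right₀ hM1 hrank
        have h3 : 3 ^ m * (C + 2) ^ k ≤ c * M := by
          rw [div_lt_iff₀ hc] at hM
          linarith
        rw [div_pow, mul_pow, ← mul_div_assoc, div_le_iff₀ (by positivity)]
        calc (2 * (M : ℝ) + 1) ^ m * ((C + 2) ^ k * r ^ k)
            ≤ 3 ^ m * M ^ m * ((C + 2) ^ k * r ^ k) := by gcongr
          _ = 3 ^ m * (C + 2) ^ k * (M ^ m * r ^ k) := by ring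
          _ ≤ c * M * (M ^ m * r ^ k) := by gcongr
          _ = c * r ^ k * (M ^ m * M) := by ring
          _ ≤ c * r ^ k * M ^ k := by gcongr

theorem volume_closedBall_eq {k : ℕ} (x : EuclideanSpace ℝ (Fin k)) {r : ℝ} (hr : 0 ≤ r) :
    volume (closedBall x r) = ENNReal.ofReal
      (r ^ k * (volume (ball (0 : EuclideanSpace ℝ (Fin k)) 1)).toReal) := by
  rw [Measure.addHaar_closedBall volume x hr, finrank_euclideanSpace_fin,
    ENNReal.ofReal_mul (by positivity), ENNReal.ofReal_toReal measure_ball_lt_top.ne]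

theorem volume_unitBall_toReal_pos (k : ℕ) :
    0 < (volume (ball (0 : EuclideanSpace ℝ (Fin k)) 1)).toReal :=
  ENNReal.toReal_pos (measure_ball_pos _ _ one_pos).ne' measure_ball_lt_top.ne

/-- A map that is Lipschitz for the Korányi distance sends null sets to sets of zero content. -/
theorem imageContent_eq_zero_of_volume_eq_zero (n : ℕ) {k : ℕ} (hk : k ≠ 0)
    {f : EuclideanSpace ℝ (Fin k) → Heis n} {E N : Set (EuclideanSpace ℝ (Fin k))} {L : ℝ}
    (hL : 0 ≤ L) (hf : ∀ x ∈ E, ∀ y ∈ E, dK n (f x) (f y) ≤ L * dist x y) (hN : volume N = 0) :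
    imageContent n hk f E N = 0 := by
  set β := (volume (ball (0 : EuclideanSpace ℝ (Fin k)) 1)).toReal with hβ
  have hβ0 : 0 < β := volume_unitBall_toReal_pos k
  set c : ℝ := (L * 10) ^ k / β with hc
  have hc0 : 0 ≤ c := by positivity
  have hbound : ∀ ε : ℝ≥0∞, 0 < ε → imageContent n hk f E N ≤ ENNReal.ofReal c * ε := by
    intro ε hε
    obtain ⟨U, hNU, hU, hUε⟩ := N.exists_isOpen_lt_of_lt (μ := volume) ε (by rwa [hN])
    refine (OuterMeasure.le_mul_of_fine_closedBall volume _ (ENNReal.ofReal c) hU hNU ?_).trans ?_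
    · intro x _ ρ hρ
      refine ⟨ρ / 2, by positivity, by linarith, ?_⟩
      set r := ρ / 2 with hr
      have hr0 : 0 < r := by positivity
      refine (imageContent_le n hk (D := L * (10 * r)) (by positivity) ?_).trans ?_
      · rintro y ⟨hy, hyE⟩ w ⟨hw, hwE⟩
        refine (hf y hyE w hwE).trans ?_
        have := dist_triangle_right y w x
        rw [mem_closedBall] at hy hw
        gcongr
        linarith
      · rw [volume_closedBall_eq x hr0.le, ← ENNReal.ofReal_mul hc0]
        refine ENNReal.ofReal_le_ofReal (le_of_eq ?_)
        rw [← hβ, hc, ← mul_assoc, mul_pow (L * 10)]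
        field_simp
    · gcongr
  refine le_antisymm ?_ zero_le
  refine ENNReal.le_of_forall_pos_le_add fun ε hε _ => ?_
  rw [zero_add]
  refine (hbound (ε / ENNReal.ofReal (c + 1))
    (ENNReal.div_pos (by simpa using hε.ne') (by simp))).trans ?_
  calc ENNReal.ofReal c * (ε / ENNReal.ofReal (c + 1))
      ≤ ENNReal.ofReal (c + 1) * (ε / ENNReal.ofReal (c + 1)) := by
        gcongr
        linarith
    _ = ε := ENNReal.mul_div_cancel (by simp; positivity) (by simp)

/-- A set of points near which the image content is `o(r ^ k)` has image of zero content. -/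
theorem imageContent_eq_zero_of_eventually_le (n : ℕ) {k : ℕ} (hk : k ≠ 0)
    {f : EuclideanSpace ℝ (Fin k) → Heis n} {E G : Set (EuclideanSpace ℝ (Fin k))}
    (hG : ∀ x ∈ G, ∀ c : ℝ, 0 < c → ∀ᶠ r in 𝓝[>] (0 : ℝ),
      imageContent n hk f E (closedBall x r) ≤ ENNReal.ofReal (c * r ^ k)) :
    imageContent n hk f E G = 0 := by
  set β := (volume (ball (0 : EuclideanSpace ℝ (Fin k)) 1)).toReal with hβ
  have hβ0 : 0 < β := volume_unitBall_toReal_pos k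
  have hball : ∀ R : ℕ, imageContent n hk f E (G ∩ ball 0 R) = 0 := by
    intro R
    have hbound : ∀ c : ℝ, 0 < c → imageContent n hk f E (G ∩ ball 0 R) ≤
        ENNReal.ofReal c * volume (ball (0 : EuclideanSpace ℝ (Fin k)) R) := by
      intro c hc
      refine OuterMeasure.le_mul_of_fine_closedBall volume _ _ isOpen_ball inter_subset_right ?_
      rintro x ⟨hx, _⟩ ρ hρ
      have h5 := tendsto_const_mul_nhdsGT_zero (show (0 : ℝ) < 5 by norm_num)
      obtain ⟨r, hr, hr0, hrρ⟩ := ((h5.eventually (hG x hx (c * β / 5 ^ k) (by positivity))).and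
        (Ioo_mem_nhdsGT hρ)).exists
      refine ⟨r, hr0, hrρ, hr.trans ?_⟩
      rw [volume_closedBall_eq x hr0.le, ← ENNReal.ofReal_mul hc.le]
      refine ENNReal.ofReal_le_ofReal (le_of_eq ?_)
      rw [← hβ, mul_pow]
      field_simp
    refine le_antisymm ?_ zero_le
    set v := volume (ball (0 : EuclideanSpace ℝ (Fin k)) R) with hv
    have hvtop : v ≠ ∞ := measure_ball_lt_top.ne
    have hlim : Tendsto (fun c : ℝ => ENNReal.ofReal c * v) (𝓝[>] 0) (𝓝 0) := by
      have h1 : Tendsto (fun c : ℝ => ENNReal.ofReal c) (𝓝[>] 0) (𝓝 0) := by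
        have := (ENNReal.continuous_ofReal.tendsto 0).mono_left
          (nhdsWithin_le_nhds (s := Ioi (0 : ℝ)))
        simpa using this
      have := ENNReal.Tendsto.mul_const h1 (Or.inr hvtop)
      simpa using this
    refine ge_of_tendsto hlim ?_
    filter_upwards [self_mem_nhdsWithin] with c hc using hbound c hc
  refine measure_mono_null (t := ⋃ R : ℕ, G ∩ ball 0 R) ?_ (measure_iUnion_null hball)
  rw [← inter_iUnion, iUnion_ball_nat, inter_univ]

end Heis

namespace Heis

/-- Almost every point of the domain of a Korányi-Lipschitz map is a point where the content of
the image of small balls is `o(r ^ k)`. -/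
theorem ae_eventually_imageContent_closedBall_le (n : ℕ) {k : ℕ} (hk : k ≠ 0) (hnk : n < k)
    {f : EuclideanSpace ℝ (Fin k) → Heis n} {E : Set (EuclideanSpace ℝ (Fin k))}
    (hE : MeasurableSet E) {L : ℝ} (hL : 0 ≤ L)
    (hf : ∀ x ∈ E, ∀ y ∈ E, dK n (f x) (f y) ≤ L * dist x y) :
    ∀ᵐ x, x ∈ E → ∀ c : ℝ, 0 < c → ∀ᶠ r in 𝓝[>] (0 : ℝ),
      imageContent n hk f E (closedBall x r) ≤ ENNReal.ofReal (c * r ^ k) := by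
  have hlip : LipschitzOnWith L.toNNReal (fun y => horizontal n (f y)) E := by
    refine LipschitzOnWith.of_dist_le_mul fun x hx y hy => ?_
    rw [dist_eq_norm, Real.coe_toNNReal L hL]
    exact (norm_horizontal_sub_le_dK n _ _).trans (hf x hx y hy)
  filter_upwards [hlip.ae_differentiableWithinAt_of_mem (μ := volume),
    ae_eventually_forall_exists_dist_le volume hE] with x hdiff hdense hx c hc
  obtain ⟨A, hA⟩ := hdiff hx
  have hD := hdense hx
  have hcoc : ∀ y m w, vertical n (f y) (f w) = vertical n (f y) (f m) + vertical n (f m) (f w) +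
      (form n).toContinuousBilinearMap (horizontal n (f m) - horizontal n (f y))
        (horizontal n (f w) - horizontal n (f y)) :=
    fun y m w => vertical_cocycle n (f y) (f m) (f w)
  have hquad : ∀ y ∈ E, ∀ w ∈ E, |vertical n (f y) (f w)| ≤ L ^ 2 * dist y w ^ 2 := by
    intro y hy w hw
    refine (abs_vertical_le_dK_sq n (f w) (f y)).trans ?_
    rw [← mul_pow, dist_comm]
    exact pow_le_pow_left₀ (dK_nonneg n _ _) (hf w hw y hy) 2
  have hsmall := cocycle_isLittleO (z := fun y => horizontal n (f y))
    (B := (form n).toContinuousBilinearMap)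
    (h := fun y w => vertical n (f y) (f w)) (form_self n) hcoc hA hD (sq_nonneg L) hquad
  have hiso := isotropic_of_cocycle_isLittleO hx (z := fun y => horizontal n (f y))
    (B := (form n).toContinuousBilinearMap)
    (h := fun y w => vertical n (f y) (f w)) hcoc hA hD hsmall
  have hrank : finrank ℝ A.range ≤ n := by
    refine finrank_le_of_isotropic n _ ?_
    rintro _ ⟨u, rfl⟩ _ ⟨v, rfl⟩
    exact hiso u v
  exact eventually_imageContent_closedBall_le n hk hA (hrank.trans_lt hnk) hsmall hc

end Heis

end Auxiliary

/-- If `k > n ≥ 1`, `E ⊆ ℝ^k` is measurable and `f : E → (ℝ^{2n+1}, d_K)`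
is Lipschitz, then `f(E)` is null for the `k`-dimensional Hausdorff measure of `d_K`. -/
theorem heisenberg_pure_unrectifiable (n k : ℕ) (hn : 0 < n) (hk : n < k)
    (E : Set (EuclideanSpace ℝ (Fin k))) (hE : MeasurableSet E)
    (f : EuclideanSpace ℝ (Fin k) → Heis n)
    (hf : LipschitzOnK n f E) :
    IsHausdorffNullK n k (f '' E) := by
  obtain ⟨L, hL, hf⟩ := hf
  have hk0 : k ≠ 0 := by omega
  refine Heis.isHausdorffNullK_of_content_eq_zero n hk0 ?_
  have hae := Heis.ae_eventually_imageContent_closedBall_le n hk0 hk hE hL hf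
  set G : Set (EuclideanSpace ℝ (Fin k)) := {x | x ∈ E → ∀ c : ℝ, 0 < c →
    ∀ᶠ r in nhdsWithin (0 : ℝ) (Ioi 0),
      Heis.imageContent n hk0 f E (closedBall x r) ≤ ENNReal.ofReal (c * r ^ k)} with hG
  have h1 : Heis.imageContent n hk0 f E (G ∩ E) = 0 :=
    Heis.imageContent_eq_zero_of_eventually_le n hk0 fun x hx => hx.1 hx.2
  have h2 : Heis.imageContent n hk0 f E Gᶜ = 0 :=
    Heis.imageContent_eq_zero_of_volume_eq_zero n hk0 hL hf hae
  have h3 : Heis.imageContent n hk0 f E E = 0 := by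
    refine measure_mono_null (fun x hx => ?_) (measure_union_null h1 h2)
    by_cases hxG : x ∈ G
    · exact Or.inl ⟨hxG, hx⟩
    · exact Or.inr hxG
  rwa [Heis.imageContent_apply, inter_self] at h3
end

section
/- Let k and n be positive integers, let E ⊆ ℝ^k be Lebesgue-measurable, and let f : E → ℝ^{2n+1} be Lipschitz as a map from E (Euclidean metric) to (ℝ^{2n+1}, d_K). Let K ⊆ E be measurable and let g : ℝ^k → ℝ^{2n+1} be a C¹ map with g = f on K. Then for Lebesgue-almost every x ∈ K, the image of the derivative Dg_x is contained in the horizontal space H_{f(x)}ℍ^n = ker α(f(x)). -/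
open MeasureTheory Metric Set
open scoped ENNReal NNReal

open Filter Topology Pointwise

/-- The tangent cone of a set at a Lebesgue density point is the whole space. -/
theorem tangentConeAt_eq_univ_of_density_one {F : Type*} [NormedAddCommGroup F]
    [NormedSpace ℝ F] [MeasurableSpace F] [BorelSpace F] [FiniteDimensional ℝ F]
    (μ : Measure F) [μ.IsAddHaarMeasure] (s : Set F) (x : F)
    (h : Tendsto (fun r => μ (s ∩ closedBall x r) / μ (closedBall x r)) (𝓝[>] 0) (𝓝 1)) :
    tangentConeAt ℝ s x = univ := by
  refine eq_univ_of_forall fun v => ?_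
  have key : ∀ m : ℕ, ∃ r : ℝ, ∃ a : F, 0 < r ∧ r < 1 / ((m : ℝ) + 1) ∧
      a ∈ closedBall v (1 / ((m : ℝ) + 1)) ∧ x + r • a ∈ s := by
    intro m
    have hm : (0 : ℝ) < 1 / ((m : ℝ) + 1) := by positivity
    obtain ⟨r, ⟨y, hys, hy⟩, hr0, hr1⟩ :=
      ((Measure.eventually_nonempty_inter_smul_of_density_one μ s x h _
        measurableSet_closedBall (measure_closedBall_pos μ v hm).ne').and
        (Ioo_mem_nhdsGT hm)).exists
    rw [singleton_add] at hy
    obtain ⟨_, ⟨a, ha, rfl⟩, rfl⟩ := hy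
    exact ⟨r, a, hr0, hr1, ha, hys⟩
  choose r a hr0 hr1 ha hs using key
  have hr : Tendsto r atTop (𝓝 0) :=
    squeeze_zero (fun m => (hr0 m).le) (fun m => (hr1 m).le) tendsto_one_div_add_atTop_nhds_zero_nat
  have hav : Tendsto a atTop (𝓝 v) :=
    tendsto_iff_dist_tendsto_zero.2
      (squeeze_zero (fun _ => dist_nonneg) ha tendsto_one_div_add_atTop_nhds_zero_nat)
  refine mem_tangentConeAt_of_seq atTop (fun m => (r m)⁻¹) (fun m => r m • a m) ?_
    (.of_forall hs) ?_
  · simpa using hr.smul hav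
  · exact hav.congr fun m => (inv_smul_smul₀ (hr0 m).ne' (a m)).symm

/-- The standard contact form at `q`, as a continuous linear functional. -/
noncomputable def contactForm (n : ℕ) (q : Heis n) : Heis n →L[ℝ] ℝ :=
  EuclideanSpace.proj (tIdx n) + (2 : ℝ) • ∑ j : Fin n,
    (q (xIdx n j) • EuclideanSpace.proj (yIdx n j) - q (yIdx n j) • EuclideanSpace.proj (xIdx n j))

theorem contactForm_apply (n : ℕ) (q v : Heis n) :
    contactForm n q v = v (tIdx n)
      + 2 * ∑ j : Fin n, (q (xIdx n j) * v (yIdx n j) - q (yIdx n j) * v (xIdx n j)) := by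
  simp [contactForm, sum_apply]

theorem mem_kerAlpha_iff (n : ℕ) (q v : Heis n) : v ∈ kerAlpha n q ↔ contactForm n q v = 0 := by
  rw [contactForm_apply]; rfl

theorem abs_contactForm_sub_le (n : ℕ) (p q : Heis n) :
    |contactForm n q (p - q)| ≤ dK n p q ^ 2 := by
  have hform : contactForm n q (p - q) = p (tIdx n) - q (tIdx n)
      + 2 * ∑ j : Fin n, (q (xIdx n j) * p (yIdx n j) - p (xIdx n j) * q (yIdx n j)) := by
    simp only [contactForm_apply, PiLp.sub_apply]
    congr 3 with j
    ring
  have hd0 : 0 ≤ dK n p q := by unfold dK; positivity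
  refine abs_le_of_sq_le_sq ?_ (by positivity)
  have hd4 : (dK n p q ^ 2) ^ 2 =
      (∑ j : Fin n, ((p (xIdx n j) - q (xIdx n j))^2 + (p (yIdx n j) - q (yIdx n j))^2))^2
        + contactForm n q (p - q) ^ 2 := by
    rw [hform, ← pow_mul, dK, ← Real.rpow_natCast, ← Real.rpow_mul (by positivity)]
    norm_num
  rw [hd4]
  exact le_add_of_nonneg_left (sq_nonneg _)

/-- If `f : E → (ℝ^{2n+1}, d_K)` is Lipschitz, `K ⊆ E` is measurable
and `g : ℝ^k → ℝ^{2n+1}` is a `C¹` map agreeing with `f` on `K`, then for a.e. `x ∈ K`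
the image of `Dg_x` is contained in the horizontal space `ker α(f(x))`. -/
theorem image_fderiv_horizontal_of_lipschitz_heisenberg (n k : ℕ) (hn : 0 < n) (hk : 0 < k)
    (E : Set (EuclideanSpace ℝ (Fin k))) (hE : MeasurableSet E)
    (f : EuclideanSpace ℝ (Fin k) → Heis n)
    (hf : LipschitzOnK n f E)
    (K : Set (EuclideanSpace ℝ (Fin k))) (hKE : K ⊆ E) (hK : MeasurableSet K)
    (g : EuclideanSpace ℝ (Fin k) → Heis n) (hg : ContDiff ℝ 1 g)
    (hfg : Set.EqOn g f K) :
    ∀ᵐ x, x ∈ K → ∀ v, fderiv ℝ g x v ∈ kerAlpha n (f x) := by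
  obtain ⟨L, -, hL⟩ := hf
  rw [← ae_restrict_iff' hK]
  filter_upwards [Besicovitch.ae_tendsto_measure_inter_div volume K, ae_restrict_mem hK]
    with x hx hxK v
  rw [mem_kerAlpha_iff, ← hfg hxK]
  have hderiv : HasFDerivWithinAt (fun y => contactForm n (g x) (g y - g x))
      ((contactForm n (g x)).comp (fderiv ℝ g x)) K x :=
    (contactForm n (g x)).hasFDerivAt.comp_hasFDerivWithinAt x
      (((hg.differentiable one_ne_zero x).hasFDerivAt.sub_const (g x)).hasFDerivWithinAt)
  have hzero : HasFDerivWithinAt (fun y => contactForm n (g x) (g y - g x))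
      (0 : EuclideanSpace ℝ (Fin k) →L[ℝ] ℝ) K x := by
    refine Asymptotics.IsBigO.hasFDerivWithinAt (n := 2) ?_ hxK one_lt_two
    refine Asymptotics.IsBigO.of_bound (L ^ 2) ?_
    filter_upwards [self_mem_nhdsWithin] with y hy
    have hd0 : 0 ≤ dK n (g y) (g x) := by unfold dK; positivity
    have hLip : dK n (g y) (g x) ≤ L * ‖y - x‖ := by
      rw [hfg hy, hfg hxK, ← dist_eq_norm]
      exact hL y (hKE hy) x (hKE hxK)
    calc ‖contactForm n (g x) (g y - g x)‖ ≤ dK n (g y) (g x) ^ 2 := abs_contactForm_sub_le n _ _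
      _ ≤ (L * ‖y - x‖) ^ 2 := by gcongr
      _ = L ^ 2 * ‖‖y - x‖ ^ 2‖ := by rw [mul_pow, norm_pow, norm_norm]
  have hv : v ∈ tangentConeAt ℝ K x := by
    rw [tangentConeAt_eq_univ_of_density_one volume K x hx]
    exact mem_univ v
  exact hderiv.unique_on hzero hv
end

section
/- Let X be a complete geodesic metric space, let a < b be real numbers, let K ⊆ [a,b] be any subset, and let f : K → X be an L-Lipschitz map. Then there exists an L-Lipschitz map F : [a,b] → X that agrees with f on K. -/
open MeasureTheory Metric Set
open scoped ENNReal NNReal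

/-- A metric space is geodesic if any two points are joined by a curve
parameterized by arc-length realizing the distance. -/
def IsGeodesicSpace (X : Type*) [MetricSpace X] : Prop :=
  ∀ x y : X, ∃ γ : ℝ → X, γ 0 = x ∧ γ (dist x y) = y ∧
    ∀ s ∈ Set.Icc (0:ℝ) (dist x y), ∀ t ∈ Set.Icc (0:ℝ) (dist x y),
      dist (γ s) (γ t) = |s - t|

/-- In a geodesic space, two points at distance at most `L * (q - p)` are joined by an
`L`-Lipschitz curve parameterized by `[p, q]`. -/
theorem IsGeodesicSpace.exists_lipschitzOnWith_Icc {X : Type*} [MetricSpace X]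
    (hX : IsGeodesicSpace X) {L : ℝ≥0} {p q : ℝ} (hpq : p ≤ q) {x y : X}
    (hxy : dist x y ≤ L * (q - p)) :
    ∃ G : ℝ → X, G p = x ∧ G q = y ∧ LipschitzOnWith L G (Icc p q) := by
  rcases hpq.eq_or_lt with rfl | hlt
  · have hxy' : x = y := dist_le_zero.1 (by simpa using hxy)
    exact ⟨fun _ => x, rfl, hxy', (LipschitzWith.const' x).lipschitzOnWith⟩
  obtain ⟨γ, h0, h1, hγ⟩ := hX x y
  have hpos : 0 < q - p := sub_pos.2 hlt
  set c := dist x y / (q - p)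
  have hc0 : 0 ≤ c := div_nonneg dist_nonneg hpos.le
  have hcL : c ≤ L := (div_le_iff₀ hpos).2 hxy
  have hcq : c * (q - p) = dist x y := div_mul_cancel₀ _ hpos.ne'
  have hmem : ∀ t ∈ Icc p q, c * (t - p) ∈ Icc 0 (dist x y) := fun t ht =>
    ⟨mul_nonneg hc0 (sub_nonneg.2 ht.1),
      hcq ▸ mul_le_mul_of_nonneg_left (sub_le_sub_right ht.2 p) hc0⟩
  refine ⟨fun t => γ (c * (t - p)), by simpa using h0, by simpa only [hcq] using h1,
    LipschitzOnWith.of_dist_le_mul fun s hs t ht => ?_⟩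
  rw [hγ _ (hmem s hs) _ (hmem t ht), ← mul_sub, sub_sub_sub_cancel_right, abs_mul,
    abs_of_nonneg hc0, Real.dist_eq]
  exact mul_le_mul_of_nonneg_right hcL (abs_nonneg _)

/-- A Lipschitz map on a set, with values in a complete space, extends to the closure of the set
with the same constant. -/
theorem LipschitzOnWith.exists_extension_closure {α X : Type*} [PseudoMetricSpace α]
    [MetricSpace X] [CompleteSpace X] {L : ℝ≥0} {f : α → X} {K : Set α}
    (hf : LipschitzOnWith L f K) :
    ∃ g : α → X, LipschitzOnWith L g (closure K) ∧ EqOn g f K := by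
  have heq : EqOn (extendFrom K f) f K := extendFrom_extends hf.continuousOn
  refine ⟨extendFrom K f, LipschitzOnWith.closure ?_ ?_, heq⟩
  · refine continuousOn_extendFrom Subset.rfl fun x hx => ?_
    have := mem_closure_iff_nhdsWithin_neBot.1 hx
    exact CompleteSpace.complete
      ((cauchy_nhds.mono nhdsWithin_le_nhds).map_of_le hf.uniformContinuousOn inf_le_right)
  · intro x hx y hy
    rw [heq hx, heq hy]
    exact hf hx hy

/-- A Lipschitz map from a closed subset `C` of the line to a geodesic space extends, with the same
constant, to any interval whose endpoints belong to `C`. -/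
theorem IsGeodesicSpace.exists_extension_Icc_of_isClosed {X : Type*} [MetricSpace X]
    (hX : IsGeodesicSpace X) {L : ℝ≥0} {C : Set ℝ} (hC : IsClosed C) {m M : ℝ} (hm : m ∈ C)
    (hM : M ∈ C) {g : ℝ → X} (hg : LipschitzOnWith L g C) :
    ∃ F : ℝ → X, LipschitzOnWith L F (Icc m M) ∧ EqOn F g (C ∩ Icc m M) := by
  have hseg : ∀ p q : ℝ, ∃ G : ℝ → X, p ∈ C → q ∈ C → p ≤ q →
      G p = g p ∧ G q = g q ∧ LipschitzOnWith L G (Icc p q) := by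
    intro p q
    by_cases h : p ∈ C ∧ q ∈ C ∧ p ≤ q
    · obtain ⟨hp, hq, hpq⟩ := h
      have hd : dist (g p) (g q) ≤ L * (q - p) := by
        simpa [Real.dist_eq, abs_sub_comm p q, abs_of_nonneg (sub_nonneg.2 hpq)] using
          hg.dist_le_mul p hp q hq
      obtain ⟨G, hG⟩ := hX.exists_lipschitzOnWith_Icc hpq hd
      exact ⟨G, fun _ _ _ => hG⟩
    · exact ⟨g, fun hp hq hpq => (h ⟨hp, hq, hpq⟩).elim⟩
  choose G hG using hseg
  have hl : ∀ t ∈ Icc m M, IsGreatest (C ∩ Iic t) (sSup (C ∩ Iic t)) := fun t ht =>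
    (hC.inter isClosed_Iic).isGreatest_csSup ⟨m, hm, ht.1⟩ ⟨t, fun _ h => h.2⟩
  have hu : ∀ t ∈ Icc m M, IsLeast (C ∩ Ici t) (sInf (C ∩ Ici t)) := fun t ht =>
    (hC.inter isClosed_Ici).isLeast_csInf ⟨M, hM, ht.2⟩ ⟨t, fun _ h => h.2⟩
  set l : ℝ → ℝ := fun t => sSup (C ∩ Iic t)
  set u : ℝ → ℝ := fun t => sInf (C ∩ Ici t)
  have hGt : ∀ t ∈ Icc m M, G (l t) (u t) (l t) = g (l t) ∧ G (l t) (u t) (u t) = g (u t) ∧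
      LipschitzOnWith L (G (l t) (u t)) (Icc (l t) (u t)) := fun t ht =>
    hG _ _ (hl t ht).1.1 (hu t ht).1.1 ((hl t ht).1.2.trans (hu t ht).1.2)
  have key : ∀ s ∈ Icc m M, ∀ t ∈ Icc m M, s ≤ t →
      dist (G (l s) (u s) s) (G (l t) (u t) t) ≤ L * (t - s) := by
    intro s hs t ht hst
    obtain ⟨-, hGs, hLs⟩ := hGt s hs
    obtain ⟨hGt, -, hLt⟩ := hGt t ht
    have hls : l s ≤ s := (hl s hs).1.2
    have hlt : l t ≤ t := (hl t ht).1.2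
    have hus : s ≤ u s := (hu s hs).1.2
    have hut : t ≤ u t := (hu t ht).1.2
    by_cases h : u s ≤ t
    · have hul : u s ≤ l t := (hl t ht).2 ⟨(hu s hs).1.1, h⟩
      have h1 := hLs.dist_le_mul s ⟨hls, hus⟩ (u s) ⟨hls.trans hus, le_rfl⟩
      have h2 := hg.dist_le_mul (u s) (hu s hs).1.1 (l t) (hl t ht).1.1
      have h3 := hLt.dist_le_mul (l t) ⟨le_rfl, hlt.trans hut⟩ t ⟨hlt, hut⟩
      rw [hGs, dist_comm s, Real.dist_eq, abs_of_nonneg (sub_nonneg.2 hus)] at h1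
      rw [dist_comm (u s), Real.dist_eq, abs_of_nonneg (sub_nonneg.2 hul)] at h2
      rw [hGt, dist_comm (l t), Real.dist_eq, abs_of_nonneg (sub_nonneg.2 hlt)] at h3
      have h4 := dist_triangle4 (G (l s) (u s) s) (g (u s)) (g (l t)) (G (l t) (u t) t)
      linarith
    · have hts : t < u s := not_le.1 h
      have hlts : l t ≤ s := by
        by_contra hlt'
        exact h (((hu s hs).2 ⟨(hl t ht).1.1, (not_le.1 hlt').le⟩).trans hlt)
      have hleq : l s = l t := le_antisymm ((hl t ht).2 ⟨(hl s hs).1.1, hls.trans hst⟩)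
        ((hl s hs).2 ⟨(hl t ht).1.1, hlts⟩)
      have hueq : u s = u t := le_antisymm ((hu s hs).2 ⟨(hu t ht).1.1, hst.trans hut⟩)
        ((hu t ht).2 ⟨(hu s hs).1.1, hts.le⟩)
      rw [hleq, hueq]
      have h1 := hLt.dist_le_mul s ⟨hlts, hst.trans hut⟩ t ⟨hlt, hut⟩
      rwa [dist_comm s, Real.dist_eq, abs_of_nonneg (sub_nonneg.2 hst)] at h1
  refine ⟨fun t => G (l t) (u t) t, LipschitzOnWith.of_dist_le_mul fun s hs t ht => ?_, ?_⟩
  · rcases le_total s t with hst | hst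
    · rw [dist_comm s, Real.dist_eq, abs_of_nonneg (sub_nonneg.2 hst)]
      exact key s hs t ht hst
    · rw [dist_comm, Real.dist_eq, abs_of_nonneg (sub_nonneg.2 hst)]
      exact key t ht s hs hst
  · rintro t ⟨htC, ht⟩
    have hlt : l t = t := le_antisymm (hl t ht).1.2 ((hl t ht).2 ⟨htC, self_mem_Iic⟩)
    have := (hGt t ht).1
    simpa only [hlt] using this

/-- An `L`-Lipschitz map from an arbitrary subset `K` of `[a,b]` to a
complete geodesic metric space extends to an `L`-Lipschitz map on `[a,b]`. -/
theorem lipschitz_extension_interval {X : Type*} [MetricSpace X] [CompleteSpace X]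
    (hX : IsGeodesicSpace X) (a b : ℝ) (hab : a < b)
    (K : Set ℝ) (hK : K ⊆ Set.Icc a b)
    (L : ℝ≥0) (f : ℝ → X) (hf : LipschitzOnWith L f K) :
    ∃ F : ℝ → X, LipschitzOnWith L F (Set.Icc a b) ∧ Set.EqOn F f K := by
  rcases K.eq_empty_or_nonempty with rfl | hne
  · exact ⟨fun _ => f a, (LipschitzWith.const' _).lipschitzOnWith, eqOn_empty _ _⟩
  obtain ⟨g, hg, hgf⟩ := hf.exists_extension_closure
  have hcpt : IsCompact (closure K) :=
    isCompact_Icc.of_isClosed_subset isClosed_closure (closure_minimal hK isClosed_Icc)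
  obtain ⟨m, hm⟩ := hcpt.exists_isLeast hne.closure
  obtain ⟨M, hM⟩ := hcpt.exists_isGreatest hne.closure
  have hmM : m ≤ M := hm.2 hM.1
  obtain ⟨F, hF, hFg⟩ := hX.exists_extension_Icc_of_isClosed isClosed_closure hm.1 hM.1 hg
  refine ⟨fun t => F (projIcc m M hmM t), ?_, fun t ht => ?_⟩
  · have h := hF.to_restrict.comp (LipschitzWith.projIcc hmM)
    rw [mul_one] at h
    exact h.lipschitzOnWith
  · have htC := subset_closure ht
    have htI : t ∈ Icc m M := ⟨hm.2 htC, hM.2 htC⟩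
    simp only [projIcc_of_mem hmM htI]
    rw [hFg ⟨htC, htI⟩, hgf ht]
end

section
/- Let k and n be positive integers and let Ω ⊆ ℝ^k be a bounded convex open set. Let f : Ω → ℝ^{2n+1} be integrable and admit an integrable weak derivative Df : Ω → L(ℝ^k, ℝ^{2n+1}) (i.e. for every smooth compactly supported φ : Ω → ℝ and every i ∈ {1,…,k}, ∫_Ω f(x) ∂φ/∂x_i(x) dx = −∫_Ω Df(x)(e_i) φ(x) dx). Assume that for Lebesgue-almost every x ∈ Ω the image of Df(x) is contained in ker α(f(x)). Then for every ε > 0 there exists a measurable set E_ε ⊆ Ω with Lebesgue measure of Ω \ E_ε less than ε such that the restriction f|_{E_ε} is Lipschitz as a map from E_ε (Euclidean metric) to (ℝ^{2n+1}, d_K). -/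
open MeasureTheory Metric Set
open scoped ENNReal NNReal

/-- `Df` is the weak (distributional) derivative of `f` on `Ω`: integration by parts
against smooth compactly supported test functions holds in every coordinate
direction. -/
def IsWeakFDerivOn {k m : ℕ} (Ω : Set (EuclideanSpace ℝ (Fin k)))
    (f : EuclideanSpace ℝ (Fin k) → EuclideanSpace ℝ (Fin m))
    (Df : EuclideanSpace ℝ (Fin k) → (EuclideanSpace ℝ (Fin k) →L[ℝ] EuclideanSpace ℝ (Fin m))) :
    Prop :=
  ∀ φ : EuclideanSpace ℝ (Fin k) → ℝ, ContDiff ℝ (⊤ : ℕ∞) φ → HasCompactSupport φ →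
    tsupport φ ⊆ Ω → ∀ i : Fin k,
      ∫ x in Ω, fderiv ℝ φ x (EuclideanSpace.single i (1:ℝ)) • f x =
        - ∫ x in Ω, φ x • Df x (EuclideanSpace.single i (1:ℝ))

section Mollification

open Filter Topology ContinuousLinearMap
open scoped Convolution

variable {V E : Type*} [NormedAddCommGroup V] [NormedSpace ℝ V] [FiniteDimensional ℝ V]
  [MeasurableSpace V] [BorelSpace V] {μ : Measure V} [μ.IsAddHaarMeasure]
  [NormedAddCommGroup E] [NormedSpace ℝ E]

/-- Convolving with a normalised bump function does not increase the `L¹` norm. -/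
theorem integral_norm_bump_convolution_le (φ : ContDiffBump (0 : V)) {g : V → E}
    (hg : Integrable g μ) :
    ∫ x, ‖(φ.normed μ ⋆[lsmul ℝ ℝ, μ] g) x‖ ∂μ ≤ ∫ x, ‖g x‖ ∂μ := by
  have hφ : Integrable (φ.normed μ) μ := φ.integrable_normed
  have key := integral_convolution (ν := μ) (μ := μ) (lsmul ℝ ℝ) hφ hg.norm
  rw [φ.integral_normed, lsmul_apply, one_smul] at key
  rw [← key]
  refine integral_mono (hφ.integrable_convolution _ hg).norm
    (hφ.integrable_convolution _ hg.norm) fun x ↦ ?_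
  refine (norm_integral_le_integral_norm _).trans_eq ?_
  refine integral_congr_ae (Eventually.of_forall fun t ↦ ?_)
  simp [norm_smul, abs_of_nonneg (φ.nonneg_normed t)]

/-- Mollifications of an integrable function converge to it in `L¹`. -/
theorem tendsto_integral_norm_bump_convolution_sub [CompleteSpace E] {φ : ℕ → ContDiffBump (0 : V)}
    (hφ : Tendsto (fun i ↦ (φ i).rOut) atTop (𝓝 0)) {g : V → E} (hg : Integrable g μ) :
    Tendsto (fun i ↦ ∫ x, ‖((φ i).normed μ ⋆[lsmul ℝ ℝ, μ] g) x - g x‖ ∂μ) atTop (𝓝 0) := by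
  rw [Metric.tendsto_atTop]
  intro ε hε
  obtain ⟨ψ, hψc, hψ, hψcont, hψi⟩ := hg.exists_hasCompactSupport_integral_sub_le
    (show 0 < ε / 4 by positivity)
  obtain ⟨R, hR⟩ := hψc.isBounded.subset_closedBall (0 : V)
  have hR' : ∀ x, R < ‖x‖ → ψ x = 0 := fun x hx ↦ by
    by_contra h
    have := hR (subset_tsupport _ h)
    rw [mem_closedBall_zero_iff] at this
    linarith
  set m := μ.real (closedBall (0 : V) (R + 1)) with hm
  have hm0 : 0 ≤ m := measureReal_nonneg
  have hε' : 0 < ε / (4 * (m + 1)) := by positivity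
  obtain ⟨δ, hδ, huc⟩ := Metric.uniformContinuous_iff.1
    (hψc.uniformContinuous_of_continuous hψcont) _ hε'
  obtain ⟨N, hN⟩ := (Metric.tendsto_atTop.1 hφ) (min δ 1) (by positivity)
  refine ⟨N, fun i hi ↦ ?_⟩
  have hri : (φ i).rOut < min δ 1 := by
    have := hN i hi
    rwa [Real.dist_eq, sub_zero, abs_of_pos (φ i).rOut_pos] at this
  have hn : Integrable ((φ i).normed μ) μ := (φ i).integrable_normed
  have hcont : ∀ x, ‖((φ i).normed μ ⋆[lsmul ℝ ℝ, μ] ψ) x - ψ x‖ ≤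
      (closedBall (0 : V) (R + 1)).indicator (fun _ ↦ ε / (4 * (m + 1))) x := by
    intro x
    by_cases hx : x ∈ closedBall (0 : V) (R + 1)
    · rw [indicator_of_mem hx, ← dist_eq_norm]
      refine ContDiffBump.dist_normed_convolution_le hψcont.aestronglyMeasurable fun y hy ↦ ?_
      exact (huc ((mem_ball.1 hy).trans (hri.trans_le (min_le_left _ _)))).le
    · rw [indicator_of_notMem hx]
      rw [mem_closedBall_zero_iff, not_le] at hx
      have h0 : ∀ y ∈ ball x (φ i).rOut, ψ y = ψ x := fun y hy ↦ by
        rw [hR' x (by linarith), hR' y]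
        have h1 : dist y x < 1 := (mem_ball.1 hy).trans (hri.trans_le (min_le_right _ _))
        rw [dist_eq_norm] at h1
        have := norm_sub_norm_le x y
        rw [norm_sub_rev] at this
        linarith
      rw [ContDiffBump.normed_convolution_eq_right h0, sub_self, norm_zero]
  have hI1 : Integrable (fun x ↦ ‖((φ i).normed μ ⋆[lsmul ℝ ℝ, μ] (g - ψ)) x‖) μ :=
    (hn.integrable_convolution _ (hg.sub hψi)).norm
  have hI2 : Integrable ((closedBall (0 : V) (R + 1)).indicator
      fun _ ↦ ε / (4 * (m + 1))) μ := by
    rw [integrable_indicator_iff measurableSet_closedBall]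
    exact integrableOn_const (measure_closedBall_lt_top.ne)
  have hI3 : Integrable (fun x ↦ ‖g x - ψ x‖) μ := (hg.sub hψi).norm
  have hpt : ∀ᵐ x ∂μ, ‖((φ i).normed μ ⋆[lsmul ℝ ℝ, μ] g) x - g x‖ ≤
      ‖((φ i).normed μ ⋆[lsmul ℝ ℝ, μ] (g - ψ)) x‖ +
      (closedBall (0 : V) (R + 1)).indicator (fun _ ↦ ε / (4 * (m + 1))) x + ‖g x - ψ x‖ := by
    filter_upwards [hn.ae_convolution_exists (lsmul ℝ ℝ) (hg.sub hψi),
      hn.ae_convolution_exists (lsmul ℝ ℝ) hψi] with x h1 h2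
    have h3 : ((φ i).normed μ ⋆[lsmul ℝ ℝ, μ] g) x =
        ((φ i).normed μ ⋆[lsmul ℝ ℝ, μ] (g - ψ)) x + ((φ i).normed μ ⋆[lsmul ℝ ℝ, μ] ψ) x := by
      rw [← h1.distrib_add h2, sub_add_cancel]
    have h4 : ((φ i).normed μ ⋆[lsmul ℝ ℝ, μ] g) x - g x =
        ((φ i).normed μ ⋆[lsmul ℝ ℝ, μ] (g - ψ)) x +
        (((φ i).normed μ ⋆[lsmul ℝ ℝ, μ] ψ) x - ψ x) - (g x - ψ x) := by
      rw [h3]; abel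
    rw [h4]
    refine (norm_sub_le _ _).trans ?_
    gcongr
    refine (norm_add_le _ _).trans ?_
    gcongr
    exact hcont x
  have hle := integral_mono_ae ((hn.integrable_convolution _ hg).sub hg).norm
    ((hI1.add hI2).add hI3) hpt
  rw [integral_add' (hI1.add hI2) hI3, integral_add' hI1 hI2,
    integral_indicator measurableSet_closedBall, setIntegral_const, smul_eq_mul, ← hm] at hle
  have h5 : ∫ x, ‖((φ i).normed μ ⋆[lsmul ℝ ℝ, μ] (g - ψ)) x‖ ∂μ ≤ ε / 4 :=
    (integral_norm_bump_convolution_le (φ i) (hg.sub hψi)).trans hψ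
  have h6 : m * (ε / (4 * (m + 1))) ≤ ε / 4 := by
    rw [mul_div_assoc', div_le_div_iff₀ (by positivity) (by positivity)]
    nlinarith
  rw [Real.dist_eq, sub_zero, abs_of_nonneg (integral_nonneg fun _ ↦ norm_nonneg _)]
  simp only [Pi.sub_apply] at hle
  linarith

end Mollification

section WeakDerivative

open Filter Topology ContinuousLinearMap
open scoped Convolution

theorem integrable_indicator_of_isOpen {V E : Type*} [TopologicalSpace V] [MeasurableSpace V]
    [OpensMeasurableSpace V] {μ : Measure V} [NormedAddCommGroup E] {s : Set V}
    (hs : IsOpen s) {f : V → E} (hf : IntegrableOn f s μ) : Integrable (s.indicator f) μ :=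
  hf.integrable_indicator hs.measurableSet

variable {V W ι : Type*} [NormedAddCommGroup V] [NormedSpace ℝ V] [FiniteDimensional ℝ V]
  [MeasurableSpace V] [BorelSpace V] {μ : Measure V} [μ.IsAddHaarMeasure]
  [NormedAddCommGroup W] [NormedSpace ℝ W]

/-- `Df` is a weak derivative of `f` on `Ω`, tested in the directions of the family `b`. -/
def HasWeakDerivAlong (μ : Measure V) (b : ι → V) (Ω : Set V) (f : V → W)
    (Df : V → V →L[ℝ] W) : Prop :=
  ∀ φ : V → ℝ, ContDiff ℝ (⊤ : ℕ∞) φ → HasCompactSupport φ → tsupport φ ⊆ Ω → ∀ i : ι,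
    ∫ x in Ω, fderiv ℝ φ x (b i) • f x ∂μ = - ∫ x in Ω, φ x • Df x (b i) ∂μ

/-- The derivative of a mollification is the mollification of the weak derivative, at points whose
distance to the complement of the domain exceeds the mollification scale. -/
theorem fderiv_bump_convolution_eq {Ω : Set V} (hΩ : IsOpen Ω) {f : V → W} {Df : V → V →L[ℝ] W}
    (hf : IntegrableOn f Ω μ) (hDf : IntegrableOn Df Ω μ) (b : Module.Basis ι ℝ V)
    (hweak : HasWeakDerivAlong μ b Ω f Df) (φ : ContDiffBump (0 : V)) {x : V}
    (hx : closedBall x φ.rOut ⊆ Ω) :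
    fderiv ℝ (φ.normed μ ⋆[lsmul ℝ ℝ, μ] Ω.indicator f) x =
      (φ.normed μ ⋆[lsmul ℝ ℝ, μ] Ω.indicator Df) x := by
  have hfi : Integrable (Ω.indicator f) μ := integrable_indicator_of_isOpen hΩ hf
  have hDfi : Integrable (Ω.indicator Df) μ := integrable_indicator_of_isOpen hΩ hDf
  have hsm : ContDiff ℝ (⊤ : ℕ∞) (φ.normed μ) := φ.contDiff_normed
  have hcs : HasCompactSupport (φ.normed μ) := φ.hasCompactSupport_normed
  have hD := (hcs.hasFDerivAt_convolution_left (lsmul ℝ ℝ) (φ.contDiff_normed)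
    hfi.locallyIntegrable x).fderiv
  rw [hD]
  have hconvD : ConvolutionExistsAt (φ.normed μ) (Ω.indicator Df) x (lsmul ℝ ℝ) μ :=
    hcs.convolutionExists_left _ hsm.continuous hDfi.locallyIntegrable x
  have hconvf : ConvolutionExistsAt (fderiv ℝ (φ.normed μ)) (Ω.indicator f) x
      ((lsmul ℝ ℝ).precompL _) μ :=
    (hcs.fderiv ℝ).convolutionExists_left _ (hsm.continuous_fderiv (by simp))
      hfi.locallyIntegrable x
  set ψ : V → ℝ := fun w ↦ φ.normed μ (x - w) with hψ
  have hψsm : ContDiff ℝ (⊤ : ℕ∞) ψ := hsm.comp (contDiff_const.sub contDiff_id)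
  have hψts : tsupport ψ ⊆ closedBall x φ.rOut := by
    refine closure_minimal (fun w hw ↦ ?_) isClosed_closedBall
    have : x - w ∈ Function.support (φ.normed μ) := hw
    rw [φ.support_normed_eq, mem_ball_zero_iff] at this
    rw [mem_closedBall, dist_comm, dist_eq_norm]
    exact this.le
  have hψcs : HasCompactSupport ψ :=
    (isCompact_closedBall x φ.rOut).of_isClosed_subset (isClosed_tsupport _) hψts
  have hψd : ∀ w v, fderiv ℝ ψ w v = - fderiv ℝ (φ.normed μ) (x - w) v := by
    intro w v
    have h1 : HasFDerivAt (fun w ↦ x - w) (-(ContinuousLinearMap.id ℝ _)) w :=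
      (hasFDerivAt_id w).const_sub x
    have h2 : HasFDerivAt (φ.normed μ) (fderiv ℝ (φ.normed μ) (x - w)) (x - w) :=
      (hsm.differentiable (by simp) _).hasFDerivAt
    have h3 : HasFDerivAt ψ _ w := h2.comp w h1
    rw [h3.fderiv]
    simp
  refine ContinuousLinearMap.coe_injective
    (b.ext fun i ↦ ?_)
  simp only [coe_coe]
  have hL : ((fderiv ℝ (φ.normed μ) ⋆[(lsmul ℝ ℝ).precompL _, μ] Ω.indicator f) x)
      (b i) =
      - ∫ w in Ω, fderiv ℝ ψ w (b i) • f w ∂μ := by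
    rw [convolution_eq_swap, ← integral_neg, ← integral_indicator hΩ.measurableSet,
      ContinuousLinearMap.integral_apply]
    · congr 1
      ext1 w
      by_cases hw : w ∈ Ω
      · simp [hw, hψd]
      · simp [hw]
    · exact hconvf.integrable_swap
  have hR : ((φ.normed μ ⋆[lsmul ℝ ℝ, μ] Ω.indicator Df) x)
      (b i) =
      ∫ w in Ω, ψ w • Df w (b i) ∂μ := by
    rw [convolution_eq_swap, ← integral_indicator hΩ.measurableSet,
      ContinuousLinearMap.integral_apply]
    · congr 1
      ext1 w
      by_cases hw : w ∈ Ω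
      · simp [hw, hψ]
      · simp [hw]
    · exact hconvD.integrable_swap
  rw [hL, hR, hweak ψ hψsm hψcs (hψts.trans hx) i, neg_neg]

end WeakDerivative

section BallAverages

open Filter Topology Module

variable {V W : Type*} [NormedAddCommGroup V] [NormedSpace ℝ V] [FiniteDimensional ℝ V]
  [MeasurableSpace V] [BorelSpace V] {μ : Measure V} [μ.IsAddHaarMeasure]
  [NormedAddCommGroup W] [NormedSpace ℝ W]

theorem integral_comp_add_smul (F : V → ℝ) (x : V) {τ : ℝ} (hτ : 0 < τ) :
    ∫ v, F (x + τ • v) ∂μ = (τ ^ finrank ℝ V)⁻¹ * ∫ w, F w ∂μ := by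
  rw [Measure.integral_comp_smul_of_nonneg μ (fun w ↦ F (x + w)) τ (hR := hτ.le),
    integral_add_left_eq_self, smul_eq_mul]

theorem setIntegral_closedBall_comp_add_smul (F : V → ℝ) (x : V) {τ : ℝ} (hτ : 0 < τ) :
    ∫ v in closedBall 0 2, F (x + τ • v) ∂μ =
      (τ ^ finrank ℝ V)⁻¹ * ∫ w in closedBall x (2 * τ), F w ∂μ := by
  rw [← integral_indicator measurableSet_closedBall, ← integral_indicator measurableSet_closedBall,
    ← integral_comp_add_smul _ x hτ]
  congr 1
  ext1 v
  have : v ∈ closedBall (0 : V) 2 ↔ x + τ • v ∈ closedBall x (2 * τ) := by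
    rw [mem_closedBall_zero_iff, mem_closedBall, dist_eq_norm, add_sub_cancel_left, norm_smul,
      Real.norm_of_nonneg hτ.le, mul_comm, mul_le_mul_iff_left₀ hτ]
  by_cases hv : v ∈ closedBall (0 : V) 2
  · rw [indicator_of_mem hv, indicator_of_mem (this.1 hv)]
  · rw [indicator_of_notMem hv, indicator_of_notMem (mt this.2 hv)]

theorem MeasureTheory.Integrable.comp_add_smul {E : Type*} [NormedAddCommGroup E] {F : V → E}
    (hF : Integrable F μ) (x : V) {τ : ℝ} (hτ : 0 < τ) :
    Integrable (fun v ↦ F (x + τ • v)) μ :=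
  (hF.comp_add_left x).comp_smul hτ.ne'

/-- The averages of a `C¹` function over the dilates `x + τ • S` vary at a rate controlled by the
averages of its derivative. -/
theorem abs_setIntegral_dilate_sub_le {u : V → ℝ} (hu : ContDiff ℝ 1 u) (x : V) {S : Set V}
    (hSm : MeasurableSet S) (hS : S ⊆ closedBall 0 2) {s r A : ℝ} (hs : 0 < s) (hsr : s ≤ r)
    (hA : ∀ τ ∈ Icc s r, ∫ v in closedBall 0 2, ‖fderiv ℝ u (x + τ • v)‖ ∂μ ≤ A) :
    |∫ v in S, u (x + r • v) ∂μ - ∫ v in S, u (x + s • v) ∂μ| ≤ 2 * A * (r - s) := by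
  have hfin : IsFiniteMeasure (μ.restrict S) :=
    ⟨by simpa using (measure_mono hS).trans_lt measure_closedBall_lt_top⟩
  have hcu : Continuous (fderiv ℝ u) := hu.continuous_fderiv (by simp)
  obtain ⟨C, hC⟩ := (isCompact_closedBall x (2 * (r + 1))).exists_bound_of_continuousOn
    hcu.continuousOn
  have hmem : ∀ v ∈ S, ∀ τ ∈ Ioo (-1) (r + 1), x + τ • v ∈ closedBall x (2 * (r + 1)) := by
    intro v hv τ hτ
    have hv2 := mem_closedBall_zero_iff.1 (hS hv)
    rw [mem_closedBall, dist_eq_norm, add_sub_cancel_left, norm_smul, Real.norm_eq_abs, mul_comm]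
    have : |τ| ≤ r + 1 := abs_le.2 ⟨by linarith [hτ.1], hτ.2.le⟩
    gcongr
  have hcont : ∀ τ : ℝ, Continuous fun v : V ↦ x + τ • v := fun τ ↦ by fun_prop
  have hint : ∀ (τ : ℝ), Integrable (fun v ↦ u (x + τ • v)) (μ.restrict S) := fun τ ↦
    IntegrableOn.mono_set (((hu.continuous.comp (hcont τ)).continuousOn).integrableOn_compact
      (isCompact_closedBall 0 2)) hS
  have hder : ∀ τ ∈ Icc s r, HasDerivAt (fun τ ↦ ∫ v in S, u (x + τ • v) ∂μ)
      (∫ v in S, fderiv ℝ u (x + τ • v) v ∂μ) τ := by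
    intro τ hτ
    refine (hasDerivAt_integral_of_dominated_loc_of_deriv_le
      (F := fun τ v ↦ u (x + τ • v)) (F' := fun τ v ↦ fderiv ℝ u (x + τ • v) v)
      (bound := fun _ ↦ C * 2)
      (Ioo_mem_nhds (show -1 < τ by linarith [hτ.1]) (show τ < r + 1 by linarith [hτ.2]))
      (Eventually.of_forall fun τ ↦ (hint τ).aestronglyMeasurable) (hint τ)
      ?_ ?_ (integrable_const _) ?_).2
    · exact ((hcu.comp (hcont τ)).clm_apply continuous_id).aestronglyMeasurable
    · filter_upwards [ae_restrict_mem hSm] with v hv τ' hτ'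
      have h1 := hC _ (hmem v hv τ' hτ')
      refine (ContinuousLinearMap.le_opNorm _ _).trans ?_
      have := mem_closedBall_zero_iff.1 (hS hv)
      have h0 : 0 ≤ C := (norm_nonneg _).trans h1
      gcongr
    · refine Eventually.of_forall fun v τ' _ ↦ ?_
      have h1 : HasDerivAt (fun τ : ℝ ↦ x + τ • v) v τ' := by
        simpa using ((hasDerivAt_id τ').smul_const v).const_add x
      exact ((hu.differentiable (by simp) _).hasFDerivAt).comp_hasDerivAt τ' h1
  have hbd : ∀ τ ∈ Ico s r, ‖∫ v in S, fderiv ℝ u (x + τ • v) v ∂μ‖ ≤ 2 * A := by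
    intro τ hτ
    have hi : IntegrableOn (fun v ↦ ‖fderiv ℝ u (x + τ • v)‖) (closedBall 0 2) μ :=
      ((hcu.comp (hcont τ)).norm.continuousOn).integrableOn_compact (isCompact_closedBall 0 2)
    calc ‖∫ v in S, fderiv ℝ u (x + τ • v) v ∂μ‖
        ≤ ∫ v in S, ‖fderiv ℝ u (x + τ • v)‖ * 2 ∂μ := by
          refine norm_integral_le_of_norm_le ((hi.mono_set hS).mul_const 2) ?_
          filter_upwards [ae_restrict_mem hSm] with v hv
          refine (ContinuousLinearMap.le_opNorm _ _).trans ?_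
          have := mem_closedBall_zero_iff.1 (hS hv)
          gcongr
      _ = 2 * ∫ v in S, ‖fderiv ℝ u (x + τ • v)‖ ∂μ := by rw [integral_mul_const, mul_comm]
      _ ≤ 2 * ∫ v in closedBall 0 2, ‖fderiv ℝ u (x + τ • v)‖ ∂μ := by
          refine mul_le_mul_of_nonneg_left ?_ zero_le_two
          exact setIntegral_mono_set hi (Eventually.of_forall fun _ ↦ norm_nonneg _)
            hS.eventuallyLE
      _ ≤ 2 * A := by gcongr; exact hA τ ⟨hτ.1, hτ.2.le⟩
  have := norm_image_sub_le_of_norm_deriv_le_segment' (fun τ hτ ↦ (hder τ hτ).hasDerivWithinAt)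
    hbd r ⟨hsr, le_rfl⟩
  simpa using this

end BallAverages

section ChainRule

open Filter Topology Module

variable {V W : Type*} [MeasurableSpace V] {μ : Measure V}
  [NormedAddCommGroup W] [NormedSpace ℝ W]

theorem abs_sub_le_of_norm_fderiv_le {h : W → ℝ} (hh : ContDiff ℝ 1 h) {C : ℝ}
    (hC : ∀ q, ‖fderiv ℝ h q‖ ≤ C) (a b : W) : |h a - h b| ≤ C * ‖a - b‖ :=
  convex_univ.norm_image_sub_le_of_norm_fderiv_le
    (fun q _ ↦ hh.differentiable (by simp) q) (fun q _ ↦ hC q) (mem_univ b) (mem_univ a)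

/-- Composing an integrable map with a `C¹` function of bounded derivative gives a function which
is integrable on sets of finite measure. -/
theorem integrableOn_comp_of_norm_fderiv_le {h : W → ℝ} (hh : ContDiff ℝ 1 h) {C : ℝ}
    (hC : ∀ q, ‖fderiv ℝ h q‖ ≤ C) {F : V → W} (hF : Integrable F μ) {S : Set V}
    (hS : μ S ≠ ∞) : IntegrableOn (fun v ↦ h (F v)) S μ := by
  have hi : IntegrableOn (fun v ↦ |h 0| + C * ‖F v‖) S μ :=
    (integrableOn_const hS).add (hF.norm.const_mul C).integrableOn
  refine hi.mono' (hh.continuous.comp_aestronglyMeasurable hF.1.restrict)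
    (Eventually.of_forall fun v ↦ ?_)
  have := abs_sub_le_of_norm_fderiv_le hh hC (F v) 0
  rw [sub_zero] at this
  have h2 := abs_sub_abs_le_abs_sub (h (F v)) (h 0)
  rw [Real.norm_eq_abs]
  linarith

theorem abs_setIntegral_comp_sub_le {h : W → ℝ} (hh : ContDiff ℝ 1 h) {C : ℝ}
    (hC : ∀ q, ‖fderiv ℝ h q‖ ≤ C) {F G : V → W} {S T : Set V} (hST : S ⊆ T)
    (hF : IntegrableOn (fun v ↦ h (F v)) S μ) (hG : IntegrableOn (fun v ↦ h (G v)) S μ)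
    (hFG : IntegrableOn (fun v ↦ ‖F v - G v‖) T μ) :
    |∫ v in S, h (F v) ∂μ - ∫ v in S, h (G v) ∂μ| ≤ C * ∫ v in T, ‖F v - G v‖ ∂μ := by
  have hC0 : 0 ≤ C := (norm_nonneg _).trans (hC 0)
  rw [← integral_sub hF hG, ← Real.norm_eq_abs, ← integral_const_mul]
  refine (norm_integral_le_of_norm_le ((hFG.mono_set hST).const_mul C)
    (Eventually.of_forall fun v ↦ abs_sub_le_of_norm_fderiv_le hh hC _ _)).trans ?_
  exact setIntegral_mono_set (hFG.const_mul C)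
    (Eventually.of_forall fun v ↦ mul_nonneg hC0 (norm_nonneg _)) hST.eventuallyLE

variable [NormedAddCommGroup V] [NormedSpace ℝ V] [FiniteDimensional ℝ V] [BorelSpace V]
  [μ.IsAddHaarMeasure]

/-- If `F` is approximated in `L¹` by smooth maps `f j` whose derivatives converge in `L¹` to `G`,
and `h` is a `C¹` function whose derivative along `G` is bounded by `K * ‖G‖`, then the average of
`h ∘ F` over `x + r • S` differs from its value at a Lebesgue point `x` by at most the size of `K`
times the averages of `‖G‖`. -/
theorem abs_setIntegral_dilate_comp_sub_le {f : ℕ → V → W} {F : V → W}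
    {g : ℕ → V → V →L[ℝ] W} {G : V → V →L[ℝ] W}
    (hf : ∀ j, ContDiff ℝ 1 (f j)) (hfi : ∀ j, Integrable (f j) μ) (hF : Integrable F μ)
    (hg : ∀ j, Integrable (g j) μ) (hG : Integrable G μ)
    (hfF : Tendsto (fun j ↦ ∫ w, ‖f j w - F w‖ ∂μ) atTop (𝓝 0))
    (hfF' : ∀ᵐ w ∂μ, Tendsto (fun j ↦ f j w) atTop (𝓝 (F w)))
    (hgG : Tendsto (fun j ↦ ∫ w, ‖g j w - G w‖ ∂μ) atTop (𝓝 0))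
    {h : W → ℝ} (hh : ContDiff ℝ 1 h) {C K B : ℝ} (hC : ∀ q, ‖fderiv ℝ h q‖ ≤ C) (hK0 : 0 ≤ K)
    {x : V} {r : ℝ} (hr : 0 < r)
    (hfg : ∀ᶠ j in atTop, ∀ w ∈ closedBall x (2 * r), fderiv ℝ (f j) w = g j w)
    (hK : ∀ᵐ w ∂μ, w ∈ closedBall x (2 * r) → ‖(fderiv ℝ h (F w)).comp (G w)‖ ≤ K * ‖G w‖)
    (hB : ∀ τ ∈ Ioc 0 r, ∫ w in closedBall x (2 * τ), ‖G w‖ ∂μ ≤ B * τ ^ finrank ℝ V)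
    (hLeb : Tendsto (fun τ : ℝ ↦ ∫ v in closedBall 0 2, ‖F (x + τ • v) - F x‖ ∂μ)
      (𝓝[>] 0) (𝓝 0))
    {S : Set V} (hSm : MeasurableSet S) (hS : S ⊆ closedBall 0 2) :
    |∫ v in S, h (F (x + r • v)) ∂μ - μ.real S * h (F x)| ≤ 2 * (K * B) * r := by
  have hC0 : 0 ≤ C := (norm_nonneg _).trans (hC 0)
  have hSfin : μ S ≠ ∞ := ((measure_mono hS).trans_lt measure_closedBall_lt_top).ne
  have hch : Continuous (fderiv ℝ h) := hh.continuous_fderiv (by simp)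
  set e : ℕ → ℝ := fun j ↦ C * ∫ w, ‖g j w - G w‖ ∂μ +
    ∫ w, ‖fderiv ℝ h (f j w) - fderiv ℝ h (F w)‖ * ‖G w‖ ∂μ with he
  have hdom : ∀ j w, ‖‖fderiv ℝ h (f j w) - fderiv ℝ h (F w)‖ * ‖G w‖‖ ≤ (C + C) * ‖G w‖ := by
    intro j w
    rw [Real.norm_of_nonneg (by positivity)]
    gcongr
    exact (norm_sub_le _ _).trans (add_le_add (hC _) (hC _))
  have hmeas : ∀ j, AEStronglyMeasurable
      (fun w ↦ ‖fderiv ℝ h (f j w) - fderiv ℝ h (F w)‖ * ‖G w‖) μ := fun j ↦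
    (((hch.comp_aestronglyMeasurable (hfi j).1).sub
      (hch.comp_aestronglyMeasurable hF.1)).norm).mul hG.1.norm
  have hdomi : Integrable (fun w ↦ (C + C) * ‖G w‖) μ := hG.norm.const_mul _
  have he0 : Tendsto e atTop (𝓝 0) := by
    have h2 : Tendsto (fun j ↦ ∫ w, ‖fderiv ℝ h (f j w) - fderiv ℝ h (F w)‖ * ‖G w‖ ∂μ)
        atTop (𝓝 (∫ _, (0 : ℝ) ∂μ)) := by
      refine tendsto_integral_of_dominated_convergence _ hmeas hdomi
        (fun j ↦ Eventually.of_forall (hdom j)) ?_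
      filter_upwards [hfF'] with w hw
      have h3 := (((hch.tendsto (F w)).comp hw).sub_const (fderiv ℝ h (F w))).norm.mul_const ‖G w‖
      simpa using h3
    simpa using (hgG.const_mul C).add h2
  have hlim : ∀ τ : ℝ, 0 < τ → Tendsto (fun j ↦ ∫ v in S, h (f j (x + τ • v)) ∂μ) atTop
      (𝓝 (∫ v in S, h (F (x + τ • v)) ∂μ)) := by
    intro τ hτ
    rw [tendsto_iff_dist_tendsto_zero]
    have h3 := (hfF.const_mul ((τ ^ finrank ℝ V)⁻¹)).const_mul C
    simp only [mul_zero] at h3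
    refine squeeze_zero (fun _ ↦ dist_nonneg) (fun j ↦ ?_) h3
    rw [Real.dist_eq, ← integral_comp_add_smul (fun w ↦ ‖f j w - F w‖) x hτ]
    simpa only [setIntegral_univ] using abs_setIntegral_comp_sub_le hh hC (subset_univ S)
      (integrableOn_comp_of_norm_fderiv_le hh hC ((hfi j).comp_add_smul x hτ) hSfin)
      (integrableOn_comp_of_norm_fderiv_le hh hC (hF.comp_add_smul x hτ) hSfin)
      (((hfi j).sub hF).comp_add_smul x hτ).norm.integrableOn
  have hrs : ∀ s ∈ Ioc 0 r, |∫ v in S, h (F (x + r • v)) ∂μ - ∫ v in S, h (F (x + s • v)) ∂μ|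
      ≤ 2 * (K * B) * r := by
    intro s hs
    have hstep : ∀ᶠ j in atTop,
        |∫ v in S, h (f j (x + r • v)) ∂μ - ∫ v in S, h (f j (x + s • v)) ∂μ| ≤
          2 * (K * B + (s ^ finrank ℝ V)⁻¹ * e j) * (r - s) := by
      filter_upwards [hfg] with j hj
      refine abs_setIntegral_dilate_sub_le (hh.comp (hf j)) x hSm hS hs.1 hs.2 fun τ hτ ↦ ?_
      have hτ0 : 0 < τ := hs.1.trans_le hτ.1
      rw [setIntegral_closedBall_comp_add_smul (fun w ↦ ‖fderiv ℝ (h ∘ f j) w‖) x hτ0]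
      have hpt : ∀ᵐ w ∂(μ.restrict (closedBall x (2 * τ))), ‖fderiv ℝ (h ∘ f j) w‖ ≤
          K * ‖G w‖ + (C * ‖g j w - G w‖ +
            ‖fderiv ℝ h (f j w) - fderiv ℝ h (F w)‖ * ‖G w‖) := by
        filter_upwards [ae_restrict_mem measurableSet_closedBall, ae_restrict_of_ae hK]
          with w hw hKw
        have hw' : w ∈ closedBall x (2 * r) :=
          closedBall_subset_closedBall (by linarith [hτ.2]) hw
        rw [fderiv_comp w (hh.differentiable (by simp) _) ((hf j).differentiable (by simp) _),
          hj w hw']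
        have hsplit : (fderiv ℝ h (f j w)).comp (g j w) =
            (fderiv ℝ h (F w)).comp (G w) + ((fderiv ℝ h (f j w)).comp (g j w - G w) +
              (fderiv ℝ h (f j w) - fderiv ℝ h (F w)).comp (G w)) := by
          ext v
          simp
        rw [hsplit]
        refine (norm_add_le _ _).trans (add_le_add (hKw hw') ((norm_add_le _ _).trans
          (add_le_add ?_ (ContinuousLinearMap.opNorm_comp_le _ _))))
        exact (ContinuousLinearMap.opNorm_comp_le _ _).trans (by gcongr; exact hC _)
      have hI1 : Integrable (fun w ↦ C * ‖g j w - G w‖) μ := ((hg j).sub hG).norm.const_mul C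
      have hI2 : Integrable (fun w ↦ ‖fderiv ℝ h (f j w) - fderiv ℝ h (F w)‖ * ‖G w‖) μ :=
        hdomi.mono' (hmeas j) (Eventually.of_forall (hdom j))
      have hI0 : IntegrableOn (fun w ↦ ‖fderiv ℝ (h ∘ f j) w‖) (closedBall x (2 * τ)) μ :=
        ((hh.comp (hf j)).continuous_fderiv (by simp)).norm.continuousOn.integrableOn_compact
          (isCompact_closedBall _ _)
      have hle : ∫ w in closedBall x (2 * τ), ‖fderiv ℝ (h ∘ f j) w‖ ∂μ ≤
          K * (B * τ ^ finrank ℝ V) + e j := by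
        refine (integral_mono_ae hI0
          ((hG.norm.const_mul K).integrableOn.add (hI1.add hI2).integrableOn) hpt).trans ?_
        rw [integral_add' (hG.norm.const_mul K).integrableOn (hI1.add hI2).integrableOn,
          integral_const_mul]
        refine add_le_add (mul_le_mul_of_nonneg_left (hB τ ⟨hτ0, hτ.2⟩) hK0) ?_
        refine (setIntegral_le_integral (hI1.add hI2)
          (Eventually.of_forall fun w ↦ ?_)).trans_eq ?_
        · exact add_nonneg (by positivity) (by positivity)
        · rw [integral_add' hI1 hI2, integral_const_mul]
      have hej : 0 ≤ e j := add_nonneg (mul_nonneg hC0 (integral_nonneg fun _ ↦ norm_nonneg _))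
        (integral_nonneg fun _ ↦ by positivity)
      calc (τ ^ finrank ℝ V)⁻¹ * ∫ w in closedBall x (2 * τ), ‖fderiv ℝ (h ∘ f j) w‖ ∂μ
          ≤ (τ ^ finrank ℝ V)⁻¹ * (K * (B * τ ^ finrank ℝ V) + e j) := by gcongr
        _ = K * B + (τ ^ finrank ℝ V)⁻¹ * e j := by
            have : τ ^ finrank ℝ V ≠ 0 := by positivity
            field_simp
        _ ≤ K * B + (s ^ finrank ℝ V)⁻¹ * e j := by
            have := hs.1
            gcongr
            exact hτ.1
    have hKB : 0 ≤ K * B := by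
      refine mul_nonneg hK0 ?_
      have h1 := (integral_nonneg fun _ ↦ norm_nonneg _).trans (hB r ⟨hr, le_rfl⟩)
      exact nonneg_of_mul_nonneg_left h1 (by positivity)
    have hfin := le_of_tendsto_of_tendsto ((hlim r hr).sub (hlim s hs.1)).abs
      ((((he0.const_mul (s ^ finrank ℝ V)⁻¹).const_add (K * B)).const_mul 2).mul_const (r - s))
      hstep
    rw [mul_zero, add_zero] at hfin
    refine hfin.trans ?_
    gcongr
    linarith [hs.1]
  have hlim0 : Tendsto (fun s : ℝ ↦ ∫ v in S, h (F (x + s • v)) ∂μ) (𝓝[>] 0)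
      (𝓝 (μ.real S * h (F x))) := by
    rw [tendsto_iff_dist_tendsto_zero]
    have h3 := hLeb.const_mul C
    rw [mul_zero] at h3
    refine squeeze_zero' (Eventually.of_forall fun _ ↦ dist_nonneg) ?_ h3
    filter_upwards [self_mem_nhdsWithin] with s hs
    have hs0 : 0 < s := hs
    have hconst : μ.real S * h (F x) = ∫ _ in S, h (F x) ∂μ := by
      rw [setIntegral_const, smul_eq_mul]
    rw [Real.dist_eq, hconst]
    exact abs_setIntegral_comp_sub_le (F := fun v ↦ F (x + s • v)) (G := fun _ ↦ F x) hh hC hS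
      (integrableOn_comp_of_norm_fderiv_le hh hC (hF.comp_add_smul x hs0) hSfin)
      (integrableOn_const hSfin)
      ((hF.comp_add_smul x hs0).integrableOn.sub
        (integrableOn_const measure_closedBall_lt_top.ne)).norm
  refine le_of_tendsto (tendsto_const_nhds.sub hlim0).abs ?_
  filter_upwards [Ioc_mem_nhdsGT hr] with s hs using hrs s hs

end ChainRule

section TwoPoint

open Filter Topology Module ContinuousLinearMap
open scoped Convolution

variable {V W ι : Type*} [NormedAddCommGroup V] [NormedSpace ℝ V] [FiniteDimensional ℝ V]
  [MeasurableSpace V] [BorelSpace V] {μ : Measure V} [μ.IsAddHaarMeasure]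
  [NormedAddCommGroup W] [NormedSpace ℝ W] [CompleteSpace W]

/-- The point `x` is a Lebesgue point of `F` at which the means of `‖G‖` over small balls are
controlled by `B`, up to the scale `r`. -/
structure IsControlledPoint (μ : Measure V) (F : V → W) (G : V → V →L[ℝ] W) (B r : ℝ) (x : V) :
    Prop where
  setIntegral_le : ∀ τ ∈ Ioc 0 r, ∫ w in closedBall x (2 * τ), ‖G w‖ ∂μ ≤ B * τ ^ finrank ℝ V
  tendsto : Tendsto (fun τ : ℝ ↦ ∫ v in closedBall 0 2, ‖F (x + τ • v) - F x‖ ∂μ) (𝓝[>] 0) (𝓝 0)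

/-- Comparison of the value of `h ∘ f` at a controlled point with its averages, for a weakly
differentiable map `f`. -/
theorem HasWeakDerivAlong.abs_setIntegral_dilate_sub_le {Ω : Set V} (hΩ : IsOpen Ω) {f : V → W}
    {Df : V → V →L[ℝ] W} (hf : IntegrableOn f Ω μ) (hDf : IntegrableOn Df Ω μ)
    (b : Basis ι ℝ V) (hweak : HasWeakDerivAlong μ b Ω f Df)
    {h : W → ℝ} (hh : ContDiff ℝ 1 h) {C K B : ℝ} (hC : ∀ q, ‖fderiv ℝ h q‖ ≤ C) (hK0 : 0 ≤ K)
    (hK : ∀ᵐ w ∂μ, w ∈ Ω → ‖(fderiv ℝ h (f w)).comp (Df w)‖ ≤ K * ‖Df w‖)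
    {x : V} {r : ℝ} (hr : 0 < r) (hxr : closedBall x (3 * r) ⊆ Ω)
    (hx : IsControlledPoint μ (Ω.indicator f) (Ω.indicator Df) B r x)
    {S : Set V} (hSm : MeasurableSet S) (hS : S ⊆ closedBall 0 2) :
    |∫ v in S, h (Ω.indicator f (x + r • v)) ∂μ - μ.real S * h (Ω.indicator f x)| ≤
      2 * (K * B) * r := by
  have hfi : Integrable (Ω.indicator f) μ := integrable_indicator_of_isOpen hΩ hf
  have hDfi : Integrable (Ω.indicator Df) μ := integrable_indicator_of_isOpen hΩ hDf
  set φ : ℕ → ContDiffBump (0 : V) := fun j ↦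
    ⟨1 / ((j : ℝ) + 1), 2 * (1 / ((j : ℝ) + 1)), by positivity,
      by linarith [show (0 : ℝ) < 1 / ((j : ℝ) + 1) by positivity]⟩ with hφ
  have hφ0 : Tendsto (fun j ↦ (φ j).rOut) atTop (𝓝 0) := by
    have := (tendsto_one_div_add_atTop_nhds_zero_nat (𝕜 := ℝ)).const_mul 2
    rwa [mul_zero] at this
  refine abs_setIntegral_dilate_comp_sub_le
    (f := fun j ↦ (φ j).normed μ ⋆[lsmul ℝ ℝ, μ] Ω.indicator f)
    (g := fun j ↦ (φ j).normed μ ⋆[lsmul ℝ ℝ, μ] Ω.indicator Df) (G := Ω.indicator Df)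
    (fun j ↦ (φ j).hasCompactSupport_normed.contDiff_convolution_left _ (φ j).contDiff_normed
      hfi.locallyIntegrable)
    (fun j ↦ (φ j).integrable_normed.integrable_convolution _ hfi) hfi
    (fun j ↦ (φ j).integrable_normed.integrable_convolution _ hDfi) hDfi
    (tendsto_integral_norm_bump_convolution_sub hφ0 hfi)
    (ContDiffBump.ae_convolution_tendsto_right_of_locallyIntegrable (K := 2) hφ0
      (Eventually.of_forall fun j ↦ le_rfl) hfi.locallyIntegrable)
    (tendsto_integral_norm_bump_convolution_sub hφ0 hDfi) hh hC hK0 hr ?_ ?_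
    hx.setIntegral_le hx.tendsto hSm hS
  · filter_upwards [hφ0.eventually (ge_mem_nhds hr)] with j hj w hw
    refine fderiv_bump_convolution_eq hΩ hf hDf b hweak _ (Subset.trans ?_ hxr)
    refine closedBall_subset_closedBall' ?_
    have := mem_closedBall.1 hw
    linarith
  · filter_upwards [hK] with w hw hwx
    have hwΩ : w ∈ Ω := hxr (closedBall_subset_closedBall (by linarith) hwx)
    rw [indicator_of_mem hwΩ, indicator_of_mem hwΩ]
    exact hw hwΩ

/-- A pointwise Lipschitz estimate between controlled points. -/
theorem HasWeakDerivAlong.measureReal_closedBall_mul_abs_sub_le {Ω : Set V} (hΩ : IsOpen Ω)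
    {f : V → W} {Df : V → V →L[ℝ] W} (hf : IntegrableOn f Ω μ) (hDf : IntegrableOn Df Ω μ)
    (b : Basis ι ℝ V) (hweak : HasWeakDerivAlong μ b Ω f Df)
    {h : W → ℝ} (hh : ContDiff ℝ 1 h) {C K B : ℝ} (hC : ∀ q, ‖fderiv ℝ h q‖ ≤ C) (hK0 : 0 ≤ K)
    (hK : ∀ᵐ w ∂μ, w ∈ Ω → ‖(fderiv ℝ h (f w)).comp (Df w)‖ ≤ K * ‖Df w‖)
    {x y : V} (hxy : x ≠ y) (hxr : closedBall x (3 * dist x y) ⊆ Ω)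
    (hyr : closedBall y (3 * dist x y) ⊆ Ω)
    (hx : IsControlledPoint μ (Ω.indicator f) (Ω.indicator Df) B (dist x y) x)
    (hy : IsControlledPoint μ (Ω.indicator f) (Ω.indicator Df) B (dist x y) y) :
    μ.real (closedBall 0 1) * |h (f x) - h (f y)| ≤ 4 * (K * B) * dist x y := by
  have hr : 0 < dist x y := dist_pos.2 hxy
  have hxΩ : x ∈ Ω := hxr (mem_closedBall_self (by positivity))
  have hyΩ : y ∈ Ω := hyr (mem_closedBall_self (by positivity))
  set r := dist x y with hrdef
  set e : V := r⁻¹ • (y - x) with he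
  have hre : r • e = y - x := smul_inv_smul₀ hr.ne' _
  have hen : ‖e‖ = 1 := by
    rw [he, norm_smul, norm_inv, Real.norm_of_nonneg hr.le, ← dist_eq_norm, dist_comm, ← hrdef,
      inv_mul_cancel₀ hr.ne']
  have h1 := hweak.abs_setIntegral_dilate_sub_le hΩ hf hDf b hh hC hK0 hK hr hxr hx
    (S := closedBall e 1) measurableSet_closedBall
    (closedBall_subset_closedBall' (by rw [dist_zero_right, hen]; norm_num))
  have h2 := hweak.abs_setIntegral_dilate_sub_le hΩ hf hDf b hh hC hK0 hK hr hyr hy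
    (S := closedBall 0 1) measurableSet_closedBall (closedBall_subset_closedBall (by norm_num))
  have h3 : ∫ v in closedBall e 1, h (Ω.indicator f (x + r • v)) ∂μ =
      ∫ v in closedBall 0 1, h (Ω.indicator f (y + r • v)) ∂μ := by
    rw [← integral_indicator measurableSet_closedBall,
      ← integral_indicator measurableSet_closedBall, ← integral_add_right_eq_self _ e]
    congr 1
    ext1 v
    have hm : v + e ∈ closedBall e 1 ↔ v ∈ closedBall (0 : V) 1 := by
      simp [mem_closedBall, dist_eq_norm]
    have hv : x + r • (v + e) = y + r • v := by rw [smul_add, hre]; abel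
    by_cases h : v ∈ closedBall (0 : V) 1
    · rw [indicator_of_mem h, indicator_of_mem (hm.2 h), hv]
    · rw [indicator_of_notMem h, indicator_of_notMem (mt hm.1 h)]
  have h4 : μ.real (closedBall e 1) = μ.real (closedBall 0 1) := by
    rw [measureReal_def, measureReal_def, Measure.addHaar_closedBall_center]
  rw [h3, h4, indicator_of_mem hxΩ] at h1
  rw [indicator_of_mem hyΩ] at h2
  rw [← abs_of_nonneg (measureReal_nonneg : 0 ≤ μ.real (closedBall (0 : V) 1)), ← abs_mul, mul_sub]
  rw [abs_le] at *
  constructor <;> linarith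

end TwoPoint

section Koranyi

open Filter Topology

theorem abs_sum_mul_add_mul_le {ι : Type*} (s : Finset ι) (a b u w : ι → ℝ) :
    |∑ j ∈ s, (a j * u j + b j * w j)| ≤
      √(∑ j ∈ s, (a j ^ 2 + b j ^ 2)) * √(∑ j ∈ s, (u j ^ 2 + w j ^ 2)) := by
  refine (Finset.abs_sum_le_sum_abs _ _).trans (le_trans (Finset.sum_le_sum fun j _ ↦ ?_)
    (Real.sum_sqrt_mul_sqrt_le s (f := fun j ↦ a j ^ 2 + b j ^ 2)
      (g := fun j ↦ u j ^ 2 + w j ^ 2) (fun j ↦ by positivity) (fun j ↦ by positivity)))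
  rw [← Real.sqrt_mul (by positivity)]
  refine Real.abs_le_sqrt ?_
  nlinarith [sq_nonneg (a j * w j - b j * u j)]

variable {n : ℕ}

theorem sum_sq_xIdx_add_sq_yIdx_le (v : Heis n) :
    ∑ j : Fin n, (v (xIdx n j) ^ 2 + v (yIdx n j) ^ 2) ≤ ‖v‖ ^ 2 := by
  have hinj : Function.Injective (Sum.elim (xIdx n) (yIdx n)) := by
    rintro (i | i) (j | j) h <;> simp [xIdx, yIdx, Fin.ext_iff] at h ⊢ <;> omega
  have hsum : ∑ j : Fin n, (v (xIdx n j) ^ 2 + v (yIdx n j) ^ 2) =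
      ∑ i ∈ Finset.univ.map ⟨_, hinj⟩, v i ^ 2 := by
    rw [Finset.sum_map, Fintype.sum_sum_type, Finset.sum_add_distrib]
    rfl
  rw [EuclideanSpace.real_norm_sq_eq, hsum]
  exact Finset.sum_le_sum_of_subset_of_nonneg (Finset.subset_univ _) fun _ _ _ ↦ sq_nonneg _

/-- The left-translated vertical coordinate `q ↦ q_t - p_t + 2 ∑ (p_x q_y - q_x p_y)` is affine,
with this linear part. -/
noncomputable def verticalForm (p : Heis n) : Heis n →L[ℝ] ℝ :=
  EuclideanSpace.proj (tIdx n) + (2 : ℝ) • ∑ j : Fin n,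
    (p (xIdx n j) • EuclideanSpace.proj (yIdx n j) - p (yIdx n j) • EuclideanSpace.proj (xIdx n j))

theorem verticalForm_apply (p v : Heis n) : verticalForm p v = v (tIdx n) +
    2 * ∑ j : Fin n, (p (xIdx n j) * v (yIdx n j) - p (yIdx n j) * v (xIdx n j)) := by
  simp [verticalForm]

/-- The squared Euclidean length of the horizontal part. -/
def horizSq (v : Heis n) : ℝ := ∑ j : Fin n, (v (xIdx n j) ^ 2 + v (yIdx n j) ^ 2)

theorem horizSq_nonneg (v : Heis n) : 0 ≤ horizSq v :=
  Finset.sum_nonneg fun _ _ ↦ by positivity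

theorem dK_eq (p q : Heis n) :
    dK n q p = (horizSq (q - p) ^ 2 + verticalForm p (q - p) ^ 2) ^ ((1 : ℝ) / 4) := by
  unfold dK horizSq
  rw [verticalForm_apply]
  congr 3
  simp only [PiLp.sub_apply]
  congr 2
  exact Finset.sum_congr rfl fun j _ ↦ by ring

/-- A smooth regularization of the Korányi distance to `p`. -/
noncomputable def koranyiReg (δ : ℝ) (p q : Heis n) : ℝ :=
  (horizSq (q - p) ^ 2 + verticalForm p (q - p) ^ 2 + δ) ^ ((1 : ℝ) / 4)

variable {δ : ℝ} {p : Heis n}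

theorem contDiff_horizSq : ContDiff ℝ 1 (horizSq (n := n)) := by
  unfold horizSq
  fun_prop

theorem contDiff_koranyiReg (hδ : 0 < δ) (p : Heis n) : ContDiff ℝ 1 (koranyiReg δ p) := by
  unfold koranyiReg
  refine ContDiff.rpow_const_of_ne ?_ fun q ↦ by positivity
  have := contDiff_horizSq (n := n)
  fun_prop

theorem koranyiReg_pos (hδ : 0 < δ) (p q : Heis n) : 0 < koranyiReg δ p q := by
  unfold koranyiReg
  positivity

theorem koranyiReg_pow_four (hδ : 0 < δ) (p q : Heis n) :
    koranyiReg δ p q ^ 4 = horizSq (q - p) ^ 2 + verticalForm p (q - p) ^ 2 + δ := by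
  unfold koranyiReg
  rw [← Real.rpow_natCast, ← Real.rpow_mul (by positivity)]
  norm_num

/-- Differentiating the fourth power of the regularized distance. -/
theorem four_mul_fderiv_koranyiReg (hδ : 0 < δ) (p q v : Heis n) :
    4 * koranyiReg δ p q ^ 3 * fderiv ℝ (koranyiReg δ p) q v =
      2 * horizSq (q - p) * (2 * ∑ j : Fin n, ((q - p) (xIdx n j) * v (xIdx n j) +
        (q - p) (yIdx n j) * v (yIdx n j))) +
      2 * verticalForm p (q - p) * verticalForm p v := by
  have hline : HasDerivAt (fun s : ℝ ↦ q + s • v) v 0 := by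
    simpa using ((hasDerivAt_id (0 : ℝ)).smul_const v).const_add q
  have hdiff : HasFDerivAt (koranyiReg δ p) (fderiv ℝ (koranyiReg δ p) q) (q + (0 : ℝ) • v) := by
    simpa using ((contDiff_koranyiReg hδ p).differentiable (by simp) q).hasFDerivAt
  have h1 := (hdiff.comp_hasDerivAt (0 : ℝ) hline).pow 4
  have hcoord : ∀ i, HasDerivAt (fun s : ℝ ↦ (q + s • v - p) i) (v i) 0 := fun i ↦
    (EuclideanSpace.proj (𝕜 := ℝ) i).hasFDerivAt.comp_hasDerivAt (0 : ℝ) (hline.sub_const p)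
  have hA : HasDerivAt (fun s : ℝ ↦ horizSq (q + s • v - p))
      (2 * ∑ j : Fin n, ((q - p) (xIdx n j) * v (xIdx n j) +
        (q - p) (yIdx n j) * v (yIdx n j))) 0 := by
    have := HasDerivAt.fun_sum (u := Finset.univ) fun (j : Fin n) _ ↦
      ((hcoord (xIdx n j)).pow 2).add ((hcoord (yIdx n j)).pow 2)
    refine this.congr_deriv ?_
    rw [Finset.mul_sum]
    refine Finset.sum_congr rfl fun j _ ↦ ?_
    simp
    ring
  have hφ : HasDerivAt (fun s : ℝ ↦ verticalForm p (q + s • v - p)) (verticalForm p v) 0 :=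
    (verticalForm p).hasFDerivAt.comp_hasDerivAt (0 : ℝ) (hline.sub_const p)
  have h2 := ((hA.pow 2).add (hφ.pow 2)).add_const δ
  have h3 := h1.unique (h2.congr_of_eventuallyEq (Eventually.of_forall fun s ↦ ?_))
  · simpa using h3
  · simpa using koranyiReg_pow_four hδ p (q + s • v)

theorem sqrt_horizSq_le (hδ : 0 < δ) (p q : Heis n) :
    √(horizSq (q - p)) ≤ koranyiReg δ p q := by
  have h4 := koranyiReg_pow_four hδ p q
  refine Real.sqrt_le_iff.2 ⟨(koranyiReg_pos hδ p q).le, ?_⟩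
  refine abs_le_of_sq_le_sq' ?_ (by positivity) |>.2
  nlinarith [sq_nonneg (verticalForm p (q - p))]

theorem abs_verticalForm_sub_le (hδ : 0 < δ) (p q : Heis n) :
    |verticalForm p (q - p)| ≤ koranyiReg δ p q ^ 2 := by
  have h4 := koranyiReg_pow_four hδ p q
  refine abs_le_of_sq_le_sq ?_ (by positivity)
  nlinarith [sq_nonneg (horizSq (q - p))]

theorem sqrt_horizSq_le_norm (v : Heis n) : √(horizSq v) ≤ ‖v‖ :=
  Real.sqrt_le_iff.2 ⟨norm_nonneg v, sum_sq_xIdx_add_sq_yIdx_le v⟩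

/-- A bound for the derivative of the regularized distance in terms of the vertical component. -/
theorem abs_fderiv_koranyiReg_le (hδ : 0 < δ) (p q v : Heis n) :
    2 * koranyiReg δ p q * |fderiv ℝ (koranyiReg δ p) q v| ≤
      2 * koranyiReg δ p q * ‖v‖ + |verticalForm p v| := by
  have hm := koranyiReg_pos hδ p q
  have h1 := four_mul_fderiv_koranyiReg hδ p q v
  have hA := sqrt_horizSq_le hδ p q
  have hφ := abs_verticalForm_sub_le hδ p q
  have hcs := (abs_sum_mul_add_mul_le Finset.univ (fun j ↦ (q - p) (xIdx n j))
    (fun j ↦ (q - p) (yIdx n j)) (fun j ↦ v (xIdx n j)) (fun j ↦ v (yIdx n j))).trans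
    (mul_le_mul hA (sqrt_horizSq_le_norm v) (Real.sqrt_nonneg _) hm.le)
  set m := koranyiReg δ p q
  have hA2 : horizSq (q - p) ≤ m ^ 2 := (Real.sqrt_le_left hm.le).1 hA
  have h2 : 4 * m ^ 3 * |fderiv ℝ (koranyiReg δ p) q v| ≤
      2 * m ^ 2 * (2 * (m * ‖v‖)) + 2 * m ^ 2 * |verticalForm p v| := by
    rw [← abs_of_pos (show 0 < 4 * m ^ 3 by positivity), ← abs_mul, h1]
    refine (abs_add_le _ _).trans ?_
    rw [abs_mul, abs_mul, abs_mul, abs_mul (2 * _) (verticalForm p v), abs_mul, abs_two,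
      abs_of_nonneg (horizSq_nonneg _)]
    gcongr
  refine le_of_mul_le_mul_left (a := 2 * m ^ 2) ?_ (by positivity)
  linarith

/-- The regularized distance has bounded derivative. -/
theorem exists_norm_fderiv_koranyiReg_le (hδ : 0 < δ) (p : Heis n) :
    ∃ C, ∀ q, ‖fderiv ℝ (koranyiReg δ p) q‖ ≤ C := by
  set m₀ := δ ^ ((1 : ℝ) / 4) with hm₀
  have hm₀pos : 0 < m₀ := by positivity
  refine ⟨1 + ‖verticalForm p‖ / (2 * m₀), fun q ↦
    ContinuousLinearMap.opNorm_le_bound _ (by positivity) fun v ↦ ?_⟩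
  have hm : m₀ ≤ koranyiReg δ p q := by
    refine Real.rpow_le_rpow hδ.le ?_ (by norm_num)
    nlinarith [sq_nonneg (horizSq (q - p)), sq_nonneg (verticalForm p (q - p))]
  have hmpos := koranyiReg_pos hδ p q
  have h1 := abs_fderiv_koranyiReg_le hδ p q v
  have h2 := (verticalForm p).le_opNorm v
  rw [Real.norm_eq_abs] at h2 ⊢
  have h3 : |fderiv ℝ (koranyiReg δ p) q v| ≤
      ‖v‖ + |verticalForm p v| / (2 * koranyiReg δ p q) := by
    rw [← sub_le_iff_le_add', le_div_iff₀ (by positivity)]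
    linarith
  refine h3.trans ?_
  rw [add_mul, one_mul, div_mul_eq_mul_div]
  gcongr

/-- Along horizontal directions the regularized distance is `2`-Lipschitz. -/
theorem norm_fderiv_koranyiReg_comp_le {V : Type*} [NormedAddCommGroup V] [NormedSpace ℝ V]
    (hδ : 0 < δ) (p q : Heis n) (A : V →L[ℝ] Heis n) (hA : ∀ v, A v ∈ kerAlpha n q) :
    ‖(fderiv ℝ (koranyiReg δ p) q).comp A‖ ≤ 2 * ‖A‖ := by
  refine ContinuousLinearMap.opNorm_le_bound _ (by positivity) fun u ↦ ?_
  have hu := hA u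
  have hle := A.le_opNorm u
  rw [ContinuousLinearMap.comp_apply, Real.norm_eq_abs]
  set v := A u
  have hm := koranyiReg_pos hδ p q
  have hv : verticalForm p v = 2 * ∑ j : Fin n, ((q - p) (yIdx n j) * v (xIdx n j) +
      (-(q - p) (xIdx n j)) * v (yIdx n j)) := by
    have hu' : v (tIdx n) = - (2 * ∑ j : Fin n, (q (xIdx n j) * v (yIdx n j) -
      q (yIdx n j) * v (xIdx n j))) := eq_neg_of_add_eq_zero_left hu
    rw [verticalForm_apply, hu', neg_add_eq_sub, ← mul_sub, ← Finset.sum_sub_distrib]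
    congr 1
    refine Finset.sum_congr rfl fun j _ ↦ ?_
    simp only [PiLp.sub_apply]
    ring
  have hcs := abs_sum_mul_add_mul_le Finset.univ (fun j ↦ (q - p) (yIdx n j))
    (fun j ↦ -(q - p) (xIdx n j)) (fun j ↦ v (xIdx n j)) (fun j ↦ v (yIdx n j))
  have hsq : ∑ j : Fin n, ((q - p) (yIdx n j) ^ 2 + (-(q - p) (xIdx n j)) ^ 2) =
      horizSq (q - p) := Finset.sum_congr rfl fun j _ ↦ by ring
  rw [hsq] at hcs
  replace hcs := hcs.trans
    (mul_le_mul (sqrt_horizSq_le hδ p q) (sqrt_horizSq_le_norm v) (Real.sqrt_nonneg _) hm.le)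
  have h1 := abs_fderiv_koranyiReg_le hδ p q v
  rw [hv, abs_mul, abs_two] at h1
  refine le_trans ?_ ((mul_le_mul_of_nonneg_left hle zero_le_two).trans_eq (by ring))
  refine le_of_mul_le_mul_left (a := 2 * koranyiReg δ p q) ?_ (by positivity)
  linarith

theorem tendsto_koranyiReg (p q : Heis n) :
    Tendsto (fun δ ↦ koranyiReg δ p q) (𝓝[>] 0) (𝓝 (dK n q p)) := by
  rw [dK_eq]
  have h : Continuous fun δ ↦ koranyiReg δ p q := by
    unfold koranyiReg
    exact (continuous_const.add continuous_id).rpow_const fun _ ↦ Or.inr (by norm_num)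
  simpa [koranyiReg] using (h.tendsto 0).mono_left nhdsWithin_le_nhds

theorem dK_self (p : Heis n) : dK n p p = 0 := by
  simp [dK_eq, horizSq]

theorem dK_nonneg (p q : Heis n) : 0 ≤ dK n p q := by
  rw [dK_eq]
  positivity

/-- The Korányi distance is bounded on bounded sets. -/
theorem exists_dK_le (n : ℕ) (R : ℝ) :
    ∃ M, 0 ≤ M ∧ ∀ p q : Heis n, ‖p‖ ≤ R → ‖q‖ ≤ R → dK n p q ≤ M := by
  have hc : Continuous fun z : Heis n × Heis n ↦ dK n z.1 z.2 := by
    unfold dK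
    exact Continuous.rpow_const (by fun_prop) fun _ ↦ Or.inr (by norm_num)
  obtain ⟨M, hM⟩ := ((isCompact_closedBall (0 : Heis n) R).prod
    (isCompact_closedBall (0 : Heis n) R)).exists_bound_of_continuousOn hc.continuousOn
  refine ⟨max M 0, le_max_right _ _, fun p q hp hq ↦ le_max_of_le_left ?_⟩
  exact (le_abs_self _).trans (hM (p, q) (by simp [hp, hq]))

end Koranyi

section ControlledPoints

open Filter Topology Module

variable {V W : Type*} [NormedAddCommGroup V] [NormedSpace ℝ V] [MeasurableSpace V]
  {μ : Measure V} [NormedAddCommGroup W] [NormedSpace ℝ W]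

/-- The points well inside `Ω` around which the means of `g` at scales at most `(N + 1)⁻¹` are
bounded by `N + 1`. -/
def boundedMeansSet (μ : Measure V) (Ω : Set V) (g : V → ℝ) (N : ℕ) : Set V :=
  {x | closedBall x (2 * (1 / ((N : ℝ) + 1))) ⊆ Ω ∧ ∀ τ ∈ Ioc 0 (1 / ((N : ℝ) + 1)),
    ∫ w in closedBall x (4 * τ), g w ∂μ ≤ ((N : ℝ) + 1) * τ ^ finrank ℝ V}

theorem monotone_boundedMeansSet (μ : Measure V) (Ω : Set V) (g : V → ℝ) :
    Monotone (boundedMeansSet μ Ω g) := by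
  intro M N hMN x hx
  have h1 : 1 / ((N : ℝ) + 1) ≤ 1 / ((M : ℝ) + 1) := by gcongr
  refine ⟨(closedBall_subset_closedBall (by gcongr)).trans hx.1, fun τ hτ ↦ ?_⟩
  have := hτ.1
  exact (hx.2 τ ⟨hτ.1, hτ.2.trans h1⟩).trans (by gcongr)

theorem closedBall_subset_of_mem_closure_boundedMeansSet {Ω : Set V} {g : V → ℝ} {N : ℕ} {x : V}
    (hx : x ∈ closure (boundedMeansSet μ Ω g N)) : closedBall x (1 / ((N : ℝ) + 1)) ⊆ Ω := by
  obtain ⟨y, hy, hxy⟩ := Metric.mem_closure_iff.1 hx (1 / ((N : ℝ) + 1)) (by positivity)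
  exact (closedBall_subset_closedBall' (by linarith)).trans hy.1

theorem setIntegral_le_of_mem_closure_boundedMeansSet {Ω : Set V} {g : V → ℝ}
    (hg : Integrable g μ) (hg0 : 0 ≤ g) {N : ℕ} {x : V}
    (hx : x ∈ closure (boundedMeansSet μ Ω g N)) {τ : ℝ} (hτ : τ ∈ Ioc 0 (1 / ((N : ℝ) + 1))) :
    ∫ w in closedBall x (2 * τ), g w ∂μ ≤ ((N : ℝ) + 1) * τ ^ finrank ℝ V := by
  obtain ⟨y, hy, hxy⟩ := Metric.mem_closure_iff.1 hx (2 * τ) (by linarith [hτ.1])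
  refine le_trans ?_ (hy.2 τ hτ)
  exact setIntegral_mono_set hg.integrableOn (Eventually.of_forall hg0)
    (closedBall_subset_closedBall' (by linarith)).eventuallyLE

theorem IsControlledPoint.mono {F : V → W} {G : V → V →L[ℝ] W} {B r s : ℝ} {x : V}
    (hx : IsControlledPoint μ F G B r x) (hsr : s ≤ r) : IsControlledPoint μ F G B s x :=
  ⟨fun τ hτ ↦ hx.setIntegral_le τ ⟨hτ.1, hτ.2.trans hsr⟩, hx.tendsto⟩

variable [FiniteDimensional ℝ V] [BorelSpace V] [μ.IsAddHaarMeasure]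

theorem setIntegral_closedBall_eq_mul_setAverage (g : V → ℝ) (x : V) {r : ℝ} (hr : 0 < r) :
    ∫ w in closedBall x r, g w ∂μ =
      r ^ finrank ℝ V * μ.real (closedBall 0 1) * ⨍ w in closedBall x r, g w ∂μ := by
  have h0 : 0 < μ.real (closedBall x r) :=
    ENNReal.toReal_pos (measure_closedBall_pos μ x hr).ne' measure_closedBall_lt_top.ne
  rw [setAverage_eq, ← Measure.addHaar_real_closedBall' μ x hr.le, smul_eq_mul,
    mul_inv_cancel_left₀ h0.ne']

/-- Almost every point is a Lebesgue point, in the form of convergence of dilates. -/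
theorem ae_tendsto_setIntegral_dilate {E : Type*} [NormedAddCommGroup E] {F : V → E}
    (hF : Integrable F μ) :
    ∀ᵐ x ∂μ, Tendsto (fun τ : ℝ ↦ ∫ v in closedBall 0 2, ‖F (x + τ • v) - F x‖ ∂μ)
      (𝓝[>] 0) (𝓝 0) := by
  filter_upwards [(Besicovitch.vitaliFamily μ).ae_tendsto_average_norm_sub
    hF.locallyIntegrable] with x hx
  have h2 : Tendsto (fun τ : ℝ ↦ 2 * τ) (𝓝[>] 0) (𝓝[>] 0) := by
    refine tendsto_nhdsWithin_iff.2 ⟨?_, ?_⟩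
    · simpa using (tendsto_id.const_mul (2 : ℝ)).mono_left
        (nhdsWithin_le_nhds (a := (0 : ℝ)) (s := Ioi 0))
    · filter_upwards [self_mem_nhdsWithin] with τ hτ
      exact mul_pos two_pos (mem_Ioi.1 hτ)
  have h3 := ((hx.comp (Besicovitch.tendsto_filterAt μ x)).comp h2).const_mul
    (2 ^ finrank ℝ V * μ.real (closedBall 0 1))
  rw [mul_zero] at h3
  refine h3.congr' ?_
  filter_upwards [self_mem_nhdsWithin] with τ hτ
  have hτ0 : (0 : ℝ) < τ := hτ
  rw [setIntegral_closedBall_comp_add_smul (fun w ↦ ‖F w - F x‖) x hτ0,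
    setIntegral_closedBall_eq_mul_setAverage _ x (by positivity), mul_pow]
  simp only [Function.comp_apply]
  field_simp

theorem ae_exists_mem_boundedMeansSet {Ω : Set V} (hΩ : IsOpen Ω) {g : V → ℝ}
    (hg : Integrable g μ) : ∀ᵐ x ∂μ, x ∈ Ω → ∃ N, x ∈ boundedMeansSet μ Ω g N := by
  filter_upwards [(Besicovitch.vitaliFamily μ).ae_tendsto_average hg.locallyIntegrable]
    with x hx hxΩ
  obtain ⟨ρ, hρ, hρΩ⟩ := nhds_basis_closedBall.mem_iff.1 (hΩ.mem_nhds hxΩ)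
  have h1 := (hx.comp (Besicovitch.tendsto_filterAt μ x)).eventually
    (ge_mem_nhds (lt_add_one (g x)))
  obtain ⟨t, ht, hts⟩ := mem_nhdsGT_iff_exists_Ioc_subset.1 h1
  set c := 4 ^ finrank ℝ V * μ.real (closedBall 0 1) * (g x + 1)
  have hinv := tendsto_one_div_add_atTop_nhds_zero_nat (𝕜 := ℝ)
  obtain ⟨N, hN⟩ := ((hinv.eventually (ge_mem_nhds (show 0 < ρ / 2 by positivity))).and
    ((hinv.eventually (ge_mem_nhds (show 0 < t / 4 from div_pos ht four_pos))).and
      (tendsto_natCast_atTop_atTop.eventually_ge_atTop c))).exists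
  refine ⟨N, (closedBall_subset_closedBall (by linarith)).trans hρΩ, fun τ hτ ↦ ?_⟩
  have hτ0 := hτ.1
  have h2 : ⨍ w in closedBall x (4 * τ), g w ∂μ ≤ g x + 1 :=
    hts ⟨by linarith, by linarith [hτ.2]⟩
  rw [setIntegral_closedBall_eq_mul_setAverage _ x (by positivity), mul_pow]
  calc 4 ^ finrank ℝ V * τ ^ finrank ℝ V * μ.real (closedBall 0 1) *
        ⨍ w in closedBall x (4 * τ), g w ∂μ
      ≤ 4 ^ finrank ℝ V * τ ^ finrank ℝ V * μ.real (closedBall 0 1) * (g x + 1) := by gcongr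
    _ = c * τ ^ finrank ℝ V := by ring
    _ ≤ ((N : ℝ) + 1) * τ ^ finrank ℝ V := by
        gcongr
        linarith

/-- Up to a set of small measure, the points of an open set of finite measure are uniformly
controlled. -/
theorem exists_measurableSet_isControlledPoint {Ω : Set V} (hΩ : IsOpen Ω) (hΩfin : μ Ω ≠ ∞)
    {F : V → W} (hF : Integrable F μ) {G : V → V →L[ℝ] W} (hG : Integrable G μ)
    {ε : ℝ≥0∞} (hε : 0 < ε) :
    ∃ E ⊆ Ω, MeasurableSet E ∧ μ (Ω \ E) < ε ∧ ∃ R B r : ℝ, 0 < r ∧ 0 ≤ B ∧ ∀ x ∈ E,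
      ‖F x‖ ≤ R ∧ closedBall x r ⊆ Ω ∧ IsControlledPoint μ F G B r x := by
  obtain ⟨Z, hZ, hZm, hZp⟩ := ((ae_tendsto_setIntegral_dilate hF).and
    hF.1.ae_eq_mk).exists_measurable_mem
  set F' := hF.1.mk F
  have hF' : StronglyMeasurable F' := hF.1.stronglyMeasurable_mk
  set Q : ℕ → Set V := boundedMeansSet μ Ω fun w ↦ ‖G w‖
  set E : ℕ → Set V := fun N ↦ closure (Q N) ∩ ({x | ‖F' x‖ ≤ N} ∩ Z) with hE
  have hEm : ∀ N, MeasurableSet (E N) := fun N ↦ isClosed_closure.measurableSet.inter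
    ((measurableSet_le hF'.norm.measurable measurable_const).inter hZm)
  have hmono : Monotone E := fun M N hMN x hx ↦
    ⟨closure_mono (monotone_boundedMeansSet μ Ω _ hMN) hx.1,
      (show ‖F' x‖ ≤ M from hx.2.1).trans (by exact_mod_cast hMN), hx.2.2⟩
  have hnull : μ (⋂ N, Ω \ E N) = 0 := by
    refine measure_mono_null (t := {x | ¬ (x ∈ Ω → ∃ N, x ∈ Q N)} ∪ Zᶜ) ?_ ?_
    · intro x hx
      by_contra hcon
      simp only [mem_union, mem_ofPred_eq, mem_compl_iff, not_or, not_not] at hcon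
      rw [mem_iInter] at hx
      obtain ⟨M, hM⟩ := hcon.1 (hx 0).1
      obtain ⟨M', hM'⟩ := exists_nat_ge ‖F' x‖
      refine (hx (max M M')).2 ⟨subset_closure (monotone_boundedMeansSet μ Ω _ (le_max_left _ _) hM),
        hM'.trans ?_, hcon.2⟩
      exact_mod_cast le_max_right M M'
    · exact measure_union_null (ae_exists_mem_boundedMeansSet hΩ hG.norm) hZ
  have hlim := tendsto_measure_iInter_atTop (μ := μ)
    (fun N ↦ (hΩ.measurableSet.diff (hEm N)).nullMeasurableSet)
    (fun M N hMN ↦ sdiff_subset_sdiff_right (hmono hMN)) ⟨0, measure_ne_top_of_subset sdiff_subset hΩfin⟩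
  rw [hnull] at hlim
  obtain ⟨N, hN⟩ := (hlim.eventually (gt_mem_nhds hε)).exists
  have hball : ∀ x ∈ E N, closedBall x (1 / ((N : ℝ) + 1)) ⊆ Ω := fun x hx ↦
    closedBall_subset_of_mem_closure_boundedMeansSet hx.1
  refine ⟨E N, fun x hx ↦ hball x hx (mem_closedBall_self (by positivity)), hEm N, hN, N,
    (N : ℝ) + 1, 1 / ((N : ℝ) + 1), by positivity, by positivity,
    fun x hx ↦ ⟨?_, hball x hx, fun τ hτ ↦ ?_, (hZp x hx.2.2).1⟩⟩
  · rw [(hZp x hx.2.2).2]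
    exact hx.2.1
  · exact setIntegral_le_of_mem_closure_boundedMeansSet hG.norm (fun _ ↦ norm_nonneg _) hx.1 hτ

end ControlledPoints

/-- If `Ω ⊆ ℝ^k` is a bounded convex open set and
`f ∈ W^{1,1}(Ω; ℝ^{2n+1})` (with integrable weak derivative `Df`) satisfies the weak
contact equation, then for every `ε > 0` there is a measurable `E_ε ⊆ Ω` with
`|Ω \ E_ε| < ε` on which `f` is Lipschitz into `(ℝ^{2n+1}, d_K)`. -/
theorem lipschitz_on_large_set_of_weak_contact (n k : ℕ) (hn : 0 < n) (hk : 0 < k)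
    (Ω : Set (EuclideanSpace ℝ (Fin k))) (hΩ : IsOpen Ω)
    (hconv : Convex ℝ Ω) (hbdd : Bornology.IsBounded Ω)
    (f : EuclideanSpace ℝ (Fin k) → Heis n)
    (Df : EuclideanSpace ℝ (Fin k) → (EuclideanSpace ℝ (Fin k) →L[ℝ] Heis n))
    (hf : IntegrableOn f Ω)
    (hDf : IntegrableOn Df Ω)
    (hweak : IsWeakFDerivOn Ω f Df)
    (hcontact : ∀ᵐ x, x ∈ Ω → ∀ v, Df x v ∈ kerAlpha n (f x)) :
    ∀ ε : ℝ, 0 < ε → ∃ Eε : Set (EuclideanSpace ℝ (Fin k)),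
      Eε ⊆ Ω ∧ MeasurableSet Eε ∧ volume (Ω \ Eε) < ENNReal.ofReal ε ∧
      LipschitzOnK n f Eε := by
  intro ε hε
  set F := Ω.indicator f
  set G := Ω.indicator Df
  have hF : Integrable F volume := integrable_indicator_of_isOpen hΩ hf
  have hG : Integrable G volume := integrable_indicator_of_isOpen hΩ hDf
  obtain ⟨E, hEΩ, hEm, hEε, R, B, r, hr, hB, hE⟩ := exists_measurableSet_isControlledPoint hΩ
    hbdd.measure_lt_top.ne hF hG (ENNReal.ofReal_pos.2 hε)
  obtain ⟨M, hM0, hM⟩ := exists_dK_le n R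
  set c : ℝ := volume.real (closedBall (0 : EuclideanSpace ℝ (Fin k)) 1)
  have hc : 0 < c := ENNReal.toReal_pos (measure_closedBall_pos volume _ one_pos).ne'
    measure_closedBall_lt_top.ne
  have hFf : ∀ x ∈ E, F x = f x := fun x hx ↦ indicator_of_mem (hEΩ hx) f
  refine ⟨E, hEΩ, hEm, hEε, 8 * B / c + M / (r / 3), by positivity, fun x hx y hy ↦ ?_⟩
  rw [add_mul]
  rcases eq_or_ne x y with rfl | hxy
  · rw [dK_self, dist_self]
    simp
  rcases le_or_gt (dist x y) (r / 3) with hle | hgt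
  · refine le_add_of_le_of_nonneg ?_ (by positivity)
    obtain ⟨-, hxΩ, hxc⟩ := hE x hx
    obtain ⟨-, hyΩ, hyc⟩ := hE y hy
    have hball : ∀ z : EuclideanSpace ℝ (Fin k),
        closedBall z (3 * dist x y) ⊆ closedBall z r := fun z ↦
      closedBall_subset_closedBall (by linarith)
    have hreg : ∀ δ : ℝ, 0 < δ →
        c * |koranyiReg δ (f y) (f x) - koranyiReg δ (f y) (f y)| ≤ 8 * B * dist x y := by
      intro δ hδ
      obtain ⟨C, hC⟩ := exists_norm_fderiv_koranyiReg_le hδ (f y)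
      have hK : ∀ᵐ w, w ∈ Ω →
          ‖(fderiv ℝ (koranyiReg δ (f y)) (f w)).comp (Df w)‖ ≤ 2 * ‖Df w‖ := by
        filter_upwards [hcontact] with w hw hwΩ
        exact norm_fderiv_koranyiReg_comp_le hδ (f y) (f w) (Df w) (hw hwΩ)
      have hweak' : HasWeakDerivAlong volume
          (EuclideanSpace.basisFun (Fin k) ℝ).toBasis Ω f Df := by
        intro φ hφ hφc hφΩ i
        simpa using hweak φ hφ hφc hφΩ i
      have := hweak'.measureReal_closedBall_mul_abs_sub_le hΩ hf hDf _ (contDiff_koranyiReg hδ _)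
        hC zero_le_two hK hxy ((hball x).trans hxΩ) ((hball y).trans hyΩ)
        (hxc.mono (by linarith)) (hyc.mono (by linarith))
      linarith
    have hlim := (((tendsto_koranyiReg (f y) (f x)).sub
      (tendsto_koranyiReg (f y) (f y))).abs).const_mul c
    have := le_of_tendsto hlim (by filter_upwards [self_mem_nhdsWithin] with δ hδ using hreg δ hδ)
    rw [dK_self, sub_zero, abs_of_nonneg (dK_nonneg _ _)] at this
    rw [div_mul_eq_mul_div, le_div_iff₀ hc]
    linarith
  · refine le_add_of_nonneg_of_le (by positivity) ?_
    have h1 := hM (f x) (f y) (hFf x hx ▸ (hE x hx).1) (hFf y hy ▸ (hE y hy).1)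
    refine h1.trans ?_
    rw [div_mul_eq_mul_div, le_div_iff₀ (by positivity)]
    gcongr
end
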